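/- arXiv:1508.05442 — 4 statements merged into one kernel-verified Lean document; each statement's English description precedes it below -/
import Mathlib

section
/- Let −∞ ≤ a < b ≤ ∞ and let X = A + iB ∈ B(H), where A and B are bounded self-adjoint operators on H and the spectrum of A is contained in the open interval (a, b). Then the spectrum of X is contained in (ℂ ∖ ℝ) ∪ (a, b). -/
/-!
An element `a + ib` with `a` strictly positive and `b` self-adjoint is invertible: writing
`a = c⋆c` with `c` invertible, it equals `c⋆(1 + id)c` with `d` self-adjoint, and `1 + id` is
invertible because `i` is not in the spectrum of `d`. Applied to the translates of `±X` by a real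
number `x`, this shows that a real `x` in the spectrum of `X = A + iB` lies between two points of
the spectrum of `A`.
-/

open ContinuousLinearMap MeasureTheory

variable {H : Type*} [NormedAddCommGroup H] [InnerProductSpace ℂ H] [CompleteSpace H]

section CStarAlgebra

variable {𝒜 : Type*} [CStarAlgebra 𝒜]

theorem isUnit_one_add_I_smul {d : 𝒜} (hd : IsSelfAdjoint d) : IsUnit (1 + Complex.I • d) := by
  have hI : IsUnit (algebraMap ℂ 𝒜 Complex.I - d) :=
    spectrum.notMem_iff.mp fun h ↦ one_ne_zero (hd.im_eq_zero_of_mem_spectrum h)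
  have hfactor : 1 + Complex.I • d = -Complex.I • (algebraMap ℂ 𝒜 Complex.I - d) := by
    simp [Algebra.algebraMap_eq_smul_one, smul_sub, smul_smul]
  rw [hfactor]
  exact hI.smul (Units.mk0 (-Complex.I) (neg_ne_zero.mpr Complex.I_ne_zero))

theorem isUnit_add_I_smul [PartialOrder 𝒜] [StarOrderedRing 𝒜] {a b : 𝒜}
    (ha : IsStrictlyPositive a) (hb : IsSelfAdjoint b) : IsUnit (a + Complex.I • b) := by
  obtain ⟨_, ⟨c, rfl⟩, rfl⟩ := CStarAlgebra.isStrictlyPositive_iff_eq_star_mul_self.mp ha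
  set d : 𝒜 := star (↑c⁻¹ : 𝒜) * b * ↑c⁻¹ with hd
  have hcancel : star (c : 𝒜) * star (↑c⁻¹ : 𝒜) = 1 := by
    rw [← star_mul, Units.inv_mul, star_one]
  have hbd : star (c : 𝒜) * d * c = b := by
    rw [hd, mul_assoc, Units.inv_mul_cancel_right, ← mul_assoc, hcancel, one_mul]
  have hfactor : star (c : 𝒜) * c + Complex.I • b = star (c : 𝒜) * (1 + Complex.I • d) * c := by
    rw [mul_add, add_mul, mul_one, mul_smul_comm, smul_mul_assoc, hbd]
  rw [hfactor]
  exact (c.isUnit.star.mul (isUnit_one_add_I_smul (hb.conjugate' _))).mul c.isUnit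

theorem exists_mem_spectrum_le_of_mem_spectrum_add_I_smul {a b : 𝒜}
    (ha : IsSelfAdjoint a) (hb : IsSelfAdjoint b) {x : ℝ}
    (hx : x ∈ spectrum ℝ (a + Complex.I • b)) : ∃ y ∈ spectrum ℝ a, y ≤ x := by
  let _ := CStarAlgebra.spectralOrder 𝒜
  have _ := CStarAlgebra.spectralOrderedRing 𝒜
  by_contra! hlt
  have hpos : IsStrictlyPositive (a - algebraMap ℝ 𝒜 x) := by
    refine CStarAlgebra.isStrictlyPositive_iff_isSelfAdjoint_and_spectrum_pos.mpr
      ⟨ha.sub (.algebraMap 𝒜 (.all x)), ?_⟩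
    rw [← spectrum.sub_singleton_eq]
    rintro _ ⟨y, hy, _, rfl, rfl⟩
    exact sub_pos.mpr (hlt y hy)
  have hunit := isUnit_add_I_smul hpos hb
  rw [sub_add_eq_add_sub] at hunit
  exact hx (IsUnit.sub_iff.mp hunit)

theorem exists_mem_spectrum_ge_of_mem_spectrum_add_I_smul {a b : 𝒜}
    (ha : IsSelfAdjoint a) (hb : IsSelfAdjoint b) {x : ℝ}
    (hx : x ∈ spectrum ℝ (a + Complex.I • b)) : ∃ y ∈ spectrum ℝ a, x ≤ y := by
  have hneg : -x ∈ spectrum ℝ (-a + Complex.I • -b) := by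
    rwa [smul_neg, ← neg_add, ← spectrum.neg_eq, Set.neg_mem_neg]
  obtain ⟨y, hy, hyx⟩ := exists_mem_spectrum_le_of_mem_spectrum_add_I_smul ha.neg hb.neg hneg
  rw [← spectrum.neg_eq] at hy
  exact ⟨-y, hy, le_neg_of_le_neg hyx⟩

theorem stmt1_general {a b : 𝒜} (ha : IsSelfAdjoint a) (hb : IsSelfAdjoint b) {S : Set ℝ}
    (hS : S.OrdConnected) (haS : spectrum ℂ a ⊆ (fun x : ℝ => (x : ℂ)) '' S) :
    spectrum ℂ (a + Complex.I • b) ⊆ {z : ℂ | z.im ≠ 0} ∪ (fun x : ℝ => (x : ℂ)) '' S := by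
  have hreal : spectrum ℝ a ⊆ S := fun y hy ↦
    Complex.ofReal_injective.mem_set_image.mp (haS (spectrum.algebraMap_mem ℂ hy))
  intro z hz
  refine or_iff_not_imp_left.mpr fun him ↦ ?_
  lift z to ℝ using not_not.mp him
  have hz : z ∈ spectrum ℝ (a + Complex.I • b) := spectrum.of_algebraMap_mem ℂ hz
  obtain ⟨y, hy, hyz⟩ := exists_mem_spectrum_le_of_mem_spectrum_add_I_smul ha hb hz
  obtain ⟨w, hw, hzw⟩ := exists_mem_spectrum_ge_of_mem_spectrum_add_I_smul ha hb hz
  exact ⟨z, hS.out (hreal hy) (hreal hw) ⟨hyz, hzw⟩, rfl⟩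

end CStarAlgebra

/-- If `X = A + iB` with `A, B` bounded self-adjoint and the spectrum of `A` contained in the
open interval `(a, b)` (with `-∞ ≤ a < b ≤ ∞`), then the spectrum of `X` is contained in
`(ℂ ∖ ℝ) ∪ (a, b)`. -/
theorem stmt1 [TopologicalSpace.SeparableSpace H] (hinf : ¬ FiniteDimensional ℂ H)
    (a b : EReal) (hab : a < b)
    (A B X : H →L[ℂ] H) (hA : IsSelfAdjoint A) (hB : IsSelfAdjoint B)
    (hspA : spectrum ℂ A ⊆ (fun x : ℝ => (x : ℂ)) '' {x : ℝ | a < (x : EReal) ∧ (x : EReal) < b})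
    (hX : X = A + Complex.I • B) :
    spectrum ℂ X ⊆
      {z : ℂ | z.im ≠ 0} ∪
        ((fun x : ℝ => (x : ℂ)) '' {x : ℝ | a < (x : EReal) ∧ (x : EReal) < b}) :=
  hX ▸ stmt1_general hA hB (Set.ordConnected_Ioo.preimage_mono EReal.coe_strictMono.monotone) hspA
end

section
/- Let k ∈ ℕ and let P be a polynomial with real coefficients of degree at most k. Then for all bounded self-adjoint operators A, B on H, Re P(A + iB) = Σ_{m=0}^{⌊k/2⌋} ((−1)^m / (2m)!) · D^{2m}P(A;B), where D^{m}P(A;B) denotes the m-th derivative at t = 0 of the map t ↦ P(A + tB) from ℝ to B(H), and P is evaluated on operators via the canonical algebra homomorphism from real polynomials to B(H). -/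
open ContinuousLinearMap MeasureTheory

variable {H : Type*} [NormedAddCommGroup H] [InnerProductSpace ℂ H] [CompleteSpace H]

/-- The real part `(Y + Y*)/2` of a bounded operator. -/
noncomputable def opRe (Y : H →L[ℂ] H) : H →L[ℂ] H := (2 : ℂ)⁻¹ • (Y + star Y)

/-- Evaluation of a real polynomial on a bounded operator, via the canonical algebra
homomorphism (coefficients are mapped into `ℂ`). -/
noncomputable def polyEval (P : Polynomial ℝ) (Y : H →L[ℂ] H) : H →L[ℂ] H :=
  Polynomial.aeval Y (P.map Complex.ofRealHom)

/- Since `z • 1` is central, `p (a + z • b)` is a polynomial in the scalar `z` with algebra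
coefficients `c j`, and Taylor's formula along real `z` identifies `c j` with the `j`-th derivative
at `0` divided by `j!`. For self-adjoint `a`, `b` and real `p` the adjoint of `p (a + i b)` is
`p (a - i b)`, so taking the real part averages the values at `z = i` and `z = -i`: the odd powers
cancel and the even ones contribute `(i ^ 2) ^ m = (-1) ^ m`. -/

open Polynomial ComplexStarModule

open scoped Nat

section Algebra

variable {R S 𝒜 M : Type*}

theorem natDegree_aeval_le [CommSemiring R] [Semiring 𝒜] [Algebra R 𝒜] (p : R[X]) (q : 𝒜[X]) :
    (aeval q p).natDegree ≤ p.natDegree * q.natDegree := by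
  rw [aeval_eq_sum_range]
  refine natDegree_sum_le_of_forall_le _ _ fun i hi ↦ ?_
  calc (p.coeff i • q ^ i).natDegree ≤ (q ^ i).natDegree := natDegree_smul_le _ _
    _ ≤ i * q.natDegree := natDegree_pow_le
    _ ≤ p.natDegree * q.natDegree :=
      Nat.mul_le_mul_right _ (Finset.mem_range_succ_iff.mp hi)

theorem eval_algebraMap_eq_sum_range [CommSemiring S] [Semiring 𝒜] [Algebra S 𝒜] (q : 𝒜[X])
    {n : ℕ} (hn : q.natDegree < n) (z : S) :
    q.eval (algebraMap S 𝒜 z) = ∑ j ∈ Finset.range n, z ^ j • q.coeff j := by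
  simp only [eval_eq_sum_range' hn, ← map_pow, ← Algebra.commutes, ← Algebra.smul_def]

theorem star_aeval [CommSemiring R] [StarRing R] [TrivialStar R] [Semiring 𝒜] [StarRing 𝒜]
    [Algebra R 𝒜] [StarModule R 𝒜] (x : 𝒜) (p : R[X]) :
    star (aeval x p) = aeval (star x) p := by
  simp only [aeval_eq_sum_range, star_sum, star_smul, star_pow, star_trivial]

theorem sum_range_two_mul_pow_add_neg_pow_smul [Ring S] [AddCommMonoid M] [Module S M] (z : S)
    (c : ℕ → M) (n : ℕ) :
    ∑ j ∈ Finset.range (2 * n), (z ^ j + (-z) ^ j) • c j =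
      (2 : S) • ∑ m ∈ Finset.range n, (z ^ 2) ^ m • c (2 * m) := by
  induction n with
  | zero => simp
  | succ n ih =>
    have even_term : z ^ (2 * n) + (-z) ^ (2 * n) = 2 * (z ^ 2) ^ n := by
      rw [(even_two_mul n).neg_pow, ← two_mul, pow_mul]
    have odd_term : z ^ (2 * n + 1) + (-z) ^ (2 * n + 1) = 0 := by
      rw [(odd_two_mul_add_one n).neg_pow, add_neg_cancel]
    rw [Nat.mul_succ, Finset.sum_range_succ, Finset.sum_range_succ, ih, even_term, odd_term,
      zero_smul, add_zero, Finset.sum_range_succ, smul_add, smul_smul]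

section LinePolynomial

variable [CommSemiring R] [Semiring 𝒜] [Algebra R 𝒜]

/-- The restriction of `p` to the line through `a` in the direction `b`: the polynomial
`p (a + b X)` in one central variable `X`, with coefficients in the (possibly noncommutative)
algebra. -/
noncomputable def linePolynomial (p : R[X]) (a b : 𝒜) : 𝒜[X] :=
  aeval (C a + C b * X) p

theorem eval_algebraMap_linePolynomial [CommSemiring S] [Algebra S 𝒜] (p : R[X]) (a b : 𝒜)
    (z : S) :
    (linePolynomial p a b).eval (algebraMap S 𝒜 z) = aeval (a + z • b) p := by
  let evalAt : 𝒜[X] →ₐ[R] 𝒜 := eval₂AlgHom (AlgHom.id R 𝒜) (algebraMap S 𝒜 z)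
    fun x ↦ (Algebra.commutes z x).symm
  have evalAt_apply (q : 𝒜[X]) : evalAt q = q.eval (algebraMap S 𝒜 z) := rfl
  have evalAt_line : evalAt (C a + C b * X) = a + z • b := by
    rw [evalAt_apply, eval_add, eval_C, eval_C_mul, eval_X, ← Algebra.commutes, Algebra.smul_def]
  rw [← evalAt_apply, linePolynomial, ← aeval_algHom_apply, evalAt_line]

theorem natDegree_linePolynomial_le (p : R[X]) (a b : 𝒜) :
    (linePolynomial p a b).natDegree ≤ p.natDegree := by
  have line_degree : (C a + C b * X).natDegree ≤ 1 := by compute_degree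
  calc (linePolynomial p a b).natDegree ≤ p.natDegree * (C a + C b * X).natDegree :=
        natDegree_aeval_le _ _
    _ ≤ p.natDegree * 1 := Nat.mul_le_mul_left _ line_degree
    _ = p.natDegree := mul_one _

end LinePolynomial

end Algebra

section Derivative

variable {R 𝕜 𝒜 : Type*} [NontriviallyNormedField 𝕜] [NormedRing 𝒜] [NormedAlgebra 𝕜 𝒜]

theorem iteratedDeriv_eval_algebraMap_zero (q : 𝒜[X]) (j : ℕ) :
    iteratedDeriv j (fun t : 𝕜 ↦ q.eval (algebraMap 𝕜 𝒜 t)) 0 = (j ! : 𝕜) • q.coeff j := by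
  have monomial_deriv (i : ℕ) : iteratedDeriv j (fun t : 𝕜 ↦ t ^ i • q.coeff i) 0 =
      if j = i then (i ! : 𝕜) • q.coeff i else 0 := by
    rw [iteratedDeriv_smul_const (by fun_prop), iteratedDeriv_fun_pow_zero,
      Nat.cast_ite, Nat.cast_zero, ite_smul, zero_smul]
  have degree_lt : q.natDegree < max q.natDegree j + 1 := by lia
  have j_mem : j ∈ Finset.range (max q.natDegree j + 1) := by simp
  simp only [eval_algebraMap_eq_sum_range q degree_lt]
  rw [iteratedDeriv_fun_sum fun i _ ↦ by fun_prop]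
  simp only [monomial_deriv, Finset.sum_ite_eq, if_pos j_mem]

theorem coeff_linePolynomial_eq_iteratedDeriv [CharZero 𝕜] [CommSemiring R] [Algebra R 𝒜]
    (p : R[X]) (a b : 𝒜) (j : ℕ) :
    (linePolynomial p a b).coeff j =
      (j ! : 𝕜)⁻¹ • iteratedDeriv j (fun t : 𝕜 ↦ aeval (a + t • b) p) 0 := by
  simp only [← eval_algebraMap_linePolynomial p a b]
  rw [iteratedDeriv_eval_algebraMap_zero,
    inv_smul_smul₀ (Nat.cast_ne_zero.mpr j.factorial_ne_zero)]

end Derivative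

section RealPart

variable {𝒜 : Type*}

theorem realPart_aeval_add_I_smul [Ring 𝒜] [StarRing 𝒜] [Algebra ℂ 𝒜] [StarModule ℂ 𝒜]
    {k : ℕ} {p : ℝ[X]} (hp : p.natDegree ≤ k) {a b : 𝒜} (ha : IsSelfAdjoint a)
    (hb : IsSelfAdjoint b) :
    (ℜ (aeval (a + Complex.I • b) p) : 𝒜) =
      ∑ m ∈ Finset.range (k / 2 + 1), (-1 : ℝ) ^ m • (linePolynomial p a b).coeff (2 * m) := by
  have degree_lt : (linePolynomial p a b).natDegree < 2 * (k / 2 + 1) := by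
    have := natDegree_linePolynomial_le p a b
    lia
  have star_line : star (a + Complex.I • b) = a + (-Complex.I) • b := by
    rw [star_add, star_smul, ha.star_eq, hb.star_eq, Complex.star_def, Complex.conj_I]
  have expand (z : ℂ) : aeval (a + z • b) p =
      ∑ j ∈ Finset.range (2 * (k / 2 + 1)), z ^ j • (linePolynomial p a b).coeff j := by
    rw [← eval_algebraMap_linePolynomial, eval_algebraMap_eq_sum_range _ degree_lt]
  have even_part : aeval (a + Complex.I • b) p + aeval (a + (-Complex.I) • b) p =
      (2 : ℝ) • ∑ m ∈ Finset.range (k / 2 + 1),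
        (-1 : ℝ) ^ m • (linePolynomial p a b).coeff (2 * m) := by
    simp only [expand, ← Finset.sum_add_distrib, ← add_smul,
      sum_range_two_mul_pow_add_neg_pow_smul, Complex.I_sq]
    simp only [← Complex.coe_smul, Complex.ofReal_pow, Complex.ofReal_neg, Complex.ofReal_one,
      Complex.ofReal_ofNat]
  rw [realPart_apply_coe, star_aeval, star_line, even_part, inv_smul_smul₀ two_ne_zero]

theorem stmt2_general [NormedRing 𝒜] [StarRing 𝒜] [NormedAlgebra ℂ 𝒜] [StarModule ℂ 𝒜]
    {k : ℕ} {p : ℝ[X]} (hp : p.natDegree ≤ k) {a b : 𝒜} (ha : IsSelfAdjoint a)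
    (hb : IsSelfAdjoint b) :
    (ℜ (aeval (a + Complex.I • b) p) : 𝒜) =
      ∑ m ∈ Finset.range (k / 2 + 1), ((-1 : ℝ) ^ m / ((2 * m)! : ℝ)) •
        iteratedDeriv (2 * m) (fun t : ℝ ↦ aeval (a + t • b) p) 0 := by
  simp only [realPart_aeval_add_I_smul hp ha hb, coeff_linePolynomial_eq_iteratedDeriv (𝕜 := ℝ),
    smul_smul, div_eq_mul_inv]

end RealPart

theorem opRe_eq_realPart (Y : H →L[ℂ] H) : opRe Y = ℜ Y := by
  rw [opRe, realPart_apply_coe, ← Complex.coe_smul, Complex.ofReal_inv, Complex.ofReal_ofNat]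

omit [CompleteSpace H] in
theorem polyEval_eq_aeval (P : ℝ[X]) (Y : H →L[ℂ] H) : polyEval P Y = aeval Y P :=
  aeval_map_algebraMap ℂ Y P

/-- For a real polynomial `P` of degree at most `k` and bounded self-adjoint `A, B`,
`Re P(A+iB) = Σ_{m=0}^{⌊k/2⌋} ((−1)^m/(2m)!) D^{2m}P(A;B)`, where `D^m P(A;B)` is the `m`-th
derivative at `t = 0` of `t ↦ P(A + tB)`. -/
theorem stmt2 [TopologicalSpace.SeparableSpace H] (hinf : ¬ FiniteDimensional ℂ H)
    (k : ℕ) (P : Polynomial ℝ) (hP : P.natDegree ≤ k)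
    (A B : H →L[ℂ] H) (hA : IsSelfAdjoint A) (hB : IsSelfAdjoint B) :
    opRe (polyEval P (A + Complex.I • B)) =
      ∑ m ∈ Finset.range (k / 2 + 1),
        ((-1 : ℝ) ^ m / (Nat.factorial (2 * m) : ℝ)) •
          iteratedDeriv (2 * m) (fun t : ℝ => polyEval P (A + t • B)) 0 := by
  simpa only [opRe_eq_realPart, polyEval_eq_aeval] using stmt2_general hP hA hB
end

section
/- Let k ∈ ℕ, λ ∈ [−1, 1], let A, B be bounded self-adjoint operators on H with the spectrum of A contained in (−1, 1) and B positive semidefinite, and set X := A + iB. Then I − λX is invertible, I − λ(A + tB) is invertible for real t near 0, and, writing D^{2m−1}g(A;B) for the (2m−1)-th derivative at t = 0 of the map t ↦ (A + tB)^{2k−1} (I − λ(A + tB))^{-1}, the following inequalities hold: if k is odd, Im{X^{2k−1}(I − λX)^{-1}} ≥ Σ_{m=1}^{k−1} ((−1)^{m−1} / (2m−1)!) · D^{2m−1}g(A;B) (the right-hand side being 0 when k = 1); if k is even, Im{X^{2k−1}(I − λX)^{-1}} ≤ Σ_{m=1}^{k−1} ((−1)^{m−1} / (2m−1)!) · D^{2m−1}g(A;B).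 -/
open ContinuousLinearMap MeasureTheory

variable {H : Type*} [NormedAddCommGroup H] [InnerProductSpace ℂ H] [CompleteSpace H]

/-- The imaginary part `(Y - Y*)/(2i)` of a bounded operator. -/
noncomputable def opIm (Y : H →L[ℂ] H) : H →L[ℂ] H := (2 * Complex.I)⁻¹ • (Y - star Y)

/-!
Write `g(y) = yⁿ (1 - λy)⁻¹` with `n = 2k - 1` and `r = (1 - λA)⁻¹`. By induction on `n`, the
difference `g(A + zB) - zⁿ (rB)ⁿ (1 - λ(A + zB))⁻¹` is a polynomial in `z` of degree less than `n`;
its coefficients are therefore the self-adjoint Taylor coefficients of `t ↦ g(A + tB)` at `0`. At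
`z = i` the imaginary part of the polynomial is the alternating sum of odd derivatives, and the rest
is `(-1)^(k-1)` times the real part of `(rB)ⁿ (1 - λ(A + iB))⁻¹`.

To see that this real part is nonnegative, factor `B = c* c` and put `T = c r c*`, which is
self-adjoint. Then `(rB)ⁿ (1 - λ(A + iB))⁻¹ = y* (1 - iλT)⁻¹ y` with `y = T^(k-1) c r`, and
`(1 - iλT)⁻¹` has real part `d* d`, where `d = (1 - iλT)⁻¹`, because `1 - iλT` has real part `1`.
The same factorization shows that `1 - λ(A + iB)` is invertible as soon as `1 - λA` is.
-/

open scoped Ring ComplexStarModule Nat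

lemma commute_ringInverse_right {M₀ : Type*} [MonoidWithZero M₀] {x y : M₀} (h : Commute x y) :
    Commute x y⁻¹ʳ := by
  by_cases hy : IsUnit y
  · obtain ⟨u, rfl⟩ := hy
    rw [Ring.inverse_unit]
    exact h.units_inv_right
  · rw [Ring.inverse_non_unit _ hy]
    exact Commute.zero_right x

lemma isSelfAdjoint_ringInverse {R : Type*} [Semiring R] [StarRing R] {x : R}
    (hx : IsSelfAdjoint x) : IsSelfAdjoint x⁻¹ʳ := by
  rw [isSelfAdjoint_iff, ← Ring.inverse_star, hx.star_eq]

lemma isUnit_one_sub_smul_of_forall_mem_spectrum {F 𝒜 : Type*} [Field F] [Ring 𝒜] [Algebra F 𝒜]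
    {l : F} {y : 𝒜} (h : ∀ x ∈ spectrum F y, l * x ≠ 1) : IsUnit (1 - l • y) := by
  rcases eq_or_ne l 0 with rfl | hl
  · simp
  have hinv : IsUnit (algebraMap F 𝒜 l⁻¹ - y) :=
    spectrum.notMem_iff.1 fun hmem => h _ hmem (mul_inv_cancel₀ hl)
  have hfac : 1 - l • y = algebraMap F 𝒜 l * (algebraMap F 𝒜 l⁻¹ - y) := by
    rw [mul_sub, ← map_mul, mul_inv_cancel₀ hl, map_one, Algebra.smul_def]
  rw [hfac]
  exact (hl.isUnit.map (algebraMap F 𝒜)).mul hinv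

lemma isUnit_one_sub_ofReal_smul_of_spectrum_subset {𝒜 : Type*} [Ring 𝒜] [Algebra ℂ 𝒜] {l : ℝ}
    (hl : l ∈ Set.Icc (-1 : ℝ) 1) {y : 𝒜}
    (hy : spectrum ℂ y ⊆ (fun x : ℝ => (x : ℂ)) '' Set.Ioo (-1 : ℝ) 1) :
    IsUnit (1 - (l : ℂ) • y) := by
  refine isUnit_one_sub_smul_of_forall_mem_spectrum fun x hx h => ?_
  obtain ⟨s, hs, rfl⟩ := hy hx
  have hls : l * s = 1 := Complex.ofReal_injective (by simpa using h)
  have : |l * s| < 1 := by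
    rw [abs_mul]
    exact mul_lt_one_of_nonneg_of_lt_one_right (abs_le.2 hl) (abs_nonneg s) (abs_lt.2 hs)
  simp [hls] at this

section Algebra

variable {K 𝒜 : Type*} [CommRing K] [Ring 𝒜] [Algebra K 𝒜]

/-- The function `g(y) = yⁿ (1 - l y)⁻¹` whose values and derivatives along a line are compared.
At the points where `1 - l y` is not invertible it takes the value `0`. -/
noncomputable def powMulResolvent (l : K) (n : ℕ) (y : 𝒜) : 𝒜 := y ^ n * (1 - l • y)⁻¹ʳ

lemma commute_ringInverse_one_sub_smul (l : K) (y : 𝒜) : Commute y (1 - l • y)⁻¹ʳ :=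
  commute_ringInverse_right <| (Commute.one_right y).sub_right ((Commute.refl y).smul_right l)

lemma powMulResolvent_succ (l : K) (n : ℕ) (y : 𝒜) :
    powMulResolvent l (n + 1) y = powMulResolvent l n y * y := by
  rw [powMulResolvent, powMulResolvent, pow_succ, mul_assoc, mul_assoc,
    (commute_ringInverse_one_sub_smul l y).eq]

lemma isUnit_one_sub_mul_comm {x y : 𝒜} : IsUnit (1 - x * y) ↔ IsUnit (1 - y * x) := by
  simpa [spectrum.mem_iff, not_iff_not] using
    spectrum.unit_mem_mul_comm (R := ℤ) (a := x) (b := y) (r := 1)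

lemma mul_ringInverse_one_sub_smul_add {l z : K} {a b : 𝒜} (ha : IsUnit (1 - l • a))
    (hz : IsUnit (1 - l • (a + z • b))) :
    (a + z • b) * (1 - l • (a + z • b))⁻¹ʳ =
      (1 - l • a)⁻¹ʳ * a + z • ((1 - l • a)⁻¹ʳ * b * (1 - l • (a + z • b))⁻¹ʳ) := by
  set y := a + z • b with hy
  set r := (1 - l • a)⁻¹ʳ
  set v := (1 - l • y)⁻¹ʳ
  have hexchange : (1 - l • a) * y = a * (1 - l • y) + z • b := by
    simp only [hy, mul_sub, sub_mul, mul_add, mul_one, one_mul, smul_add, smul_mul_assoc,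
      mul_smul_comm]
    module
  calc y * v = r * ((1 - l • a) * y) * v := by rw [Ring.inverse_mul_cancel_left _ _ ha]
    _ = r * a * ((1 - l • y) * v) + z • (r * b * v) := by
      rw [hexchange]
      simp only [mul_add, add_mul, mul_assoc, mul_smul_comm, smul_mul_assoc]
    _ = r * a + z • (r * b * v) := by rw [Ring.mul_inverse_cancel _ hz, mul_one]

lemma exists_sum_range_pow_smul_mul_add (c : ℕ → 𝒜) (n : ℕ) (a b d : 𝒜) :
    ∃ c' : ℕ → 𝒜, ∀ z : K,
      (∑ i ∈ Finset.range n, z ^ i • c i) * (a + z • b) + z ^ n • d =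
        ∑ i ∈ Finset.range (n + 1), z ^ i • c' i := by
  refine ⟨fun i => (if i < n then c i * a else d) + if i = 0 then 0 else c (i - 1) * b,
    fun z => ?_⟩
  have hlow : ∑ i ∈ Finset.range (n + 1), z ^ i • (if i < n then c i * a else d) =
      ∑ i ∈ Finset.range n, z ^ i • (c i * a) + z ^ n • d := by
    rw [Finset.sum_range_succ, if_neg (lt_irrefl n)]
    congr 1
    exact Finset.sum_congr rfl fun i hi => by rw [if_pos (Finset.mem_range.1 hi)]
  have hshift : ∑ i ∈ Finset.range (n + 1), z ^ i • (if i = 0 then 0 else c (i - 1) * b) =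
      z • ∑ i ∈ Finset.range n, z ^ i • (c i * b) := by
    simp [Finset.sum_range_succ', Finset.smul_sum, smul_smul, pow_succ']
  simp only [smul_add, Finset.sum_add_distrib, hlow, hshift, mul_add, Finset.sum_mul,
    smul_mul_assoc, mul_smul_comm]
  abel

-- The exponent of `y` equals the order of the expansion, which is why no power of `l` appears in
-- the remainder.
lemma exists_powMulResolvent_eq_sum_add {l : K} {a : 𝒜} (b : 𝒜) (ha : IsUnit (1 - l • a)) (n : ℕ) :
    ∃ c : ℕ → 𝒜, ∀ z : K, IsUnit (1 - l • (a + z • b)) →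
      powMulResolvent l n (a + z • b) = ∑ i ∈ Finset.range n, z ^ i • c i +
        z ^ n • (((1 - l • a)⁻¹ʳ * b) ^ n * (1 - l • (a + z • b))⁻¹ʳ) := by
  induction n with
  | zero => exact ⟨0, fun z _ => by simp [powMulResolvent]⟩
  | succ n ih =>
    obtain ⟨c, hc⟩ := ih
    set r := (1 - l • a)⁻¹ʳ
    obtain ⟨c', hc'⟩ := exists_sum_range_pow_smul_mul_add (K := K) c n a b ((r * b) ^ n * (r * a))
    refine ⟨c', fun z hz => ?_⟩
    set v := (1 - l • (a + z • b))⁻¹ʳ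
    have hremainder : (r * b) ^ n * v * (a + z • b) =
        (r * b) ^ n * (r * a) + z • ((r * b) ^ (n + 1) * v) := by
      rw [mul_assoc, ← (commute_ringInverse_one_sub_smul l (a + z • b)).eq,
        mul_ringInverse_one_sub_smul_add ha hz, mul_add, mul_smul_comm, ← mul_assoc _ (r * b),
        ← pow_succ]
    rw [powMulResolvent_succ, hc z hz, add_mul, smul_mul_assoc, hremainder, smul_add, ← add_assoc,
      hc', smul_smul, ← pow_succ]

section Factorization

variable {l z : K} {a p c : 𝒜}

lemma isUnit_one_sub_smul_add_smul_mul_iff (ha : IsUnit (1 - l • a)) :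
    IsUnit (1 - l • (a + z • (p * c))) ↔
      IsUnit (1 - (l * z) • (c * (1 - l • a)⁻¹ʳ * p)) := by
  have hfac : 1 - l • (a + z • (p * c)) =
      (1 - l • a) * (1 - (1 - l • a)⁻¹ʳ * ((l * z) • p) * c) := by
    rw [mul_sub, mul_one, mul_assoc, Ring.mul_inverse_cancel_left _ _ ha, smul_add, ← sub_sub,
      smul_smul, smul_mul_assoc]
  rw [hfac, ha.mul_left_iff, isUnit_one_sub_mul_comm, mul_smul_comm, mul_smul_comm, mul_assoc]

lemma mul_ringInverse_one_sub_smul_add_smul_mul (ha : IsUnit (1 - l • a))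
    (hz : IsUnit (1 - l • (a + z • (p * c)))) :
    c * (1 - l • (a + z • (p * c)))⁻¹ʳ =
      (1 - (l * z) • (c * (1 - l • a)⁻¹ʳ * p))⁻¹ʳ * (c * (1 - l • a)⁻¹ʳ) := by
  have ht := (isUnit_one_sub_smul_add_smul_mul_iff ha).1 hz
  set r := (1 - l • a)⁻¹ʳ
  set v := (1 - l • (a + z • (p * c)))⁻¹ʳ
  have hintertwine : (1 - (l * z) • (c * r * p)) * c = c * r * (1 - l • (a + z • (p * c))) := by
    have hsplit : 1 - l • (a + z • (p * c)) = (1 - l • a) - (l * z) • (p * c) := by module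
    have hcancel : c * r * (1 - l • a) = c := Ring.inverse_mul_cancel_right _ _ ha
    rw [hsplit, mul_sub, hcancel, sub_mul, one_mul]
    simp only [mul_smul_comm, smul_mul_assoc, mul_assoc]
  calc c * v = (1 - (l * z) • (c * r * p))⁻¹ʳ * ((1 - (l * z) • (c * r * p)) * c * v) := by
        rw [mul_assoc _ c, Ring.inverse_mul_cancel_left _ _ ht]
    _ = (1 - (l * z) • (c * r * p))⁻¹ʳ * (c * r) := by
        rw [hintertwine, Ring.mul_inverse_cancel_right _ _ hz]

lemma ringInverse_mul_pow_succ_mul_ringInverse (ha : IsUnit (1 - l • a))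
    (hz : IsUnit (1 - l • (a + z • (p * c)))) (n : ℕ) :
    ((1 - l • a)⁻¹ʳ * (p * c)) ^ (n + 1) * (1 - l • (a + z • (p * c)))⁻¹ʳ =
      (1 - l • a)⁻¹ʳ * p * ((c * (1 - l • a)⁻¹ʳ * p) ^ n *
        (1 - (l * z) • (c * (1 - l • a)⁻¹ʳ * p))⁻¹ʳ) * (c * (1 - l • a)⁻¹ʳ) := by
  have hv := mul_ringInverse_one_sub_smul_add_smul_mul ha hz
  set r := (1 - l • a)⁻¹ʳ
  rw [← mul_assoc, pow_succ, ← mul_assoc, mul_pow_mul, mul_assoc _ c, hv]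
  simp only [mul_assoc]

end Factorization

end Algebra

section Taylor

lemma iteratedDeriv_pow_smul_zero {𝕜 E : Type*} [NontriviallyNormedField 𝕜]
    [NormedAddCommGroup E] [NormedSpace 𝕜 E] {h : 𝕜 → E} {j : ℕ} (hh : ContDiffAt 𝕜 j h 0)
    (i : ℕ) :
    iteratedDeriv j (fun t => t ^ i • h t) 0 =
      j.descFactorial i • iteratedDeriv (j - i) h 0 := by
  have hleibniz := iteratedDerivWithin_smul (Set.mem_univ (0 : 𝕜)) uniqueDiffOn_univ
    (f := fun t : 𝕜 => t ^ i) (g := h) (n := j) (by fun_prop) hh.contDiffWithinAt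
  simp only [iteratedDerivWithin_univ, iteratedDeriv_fun_pow_zero] at hleibniz
  refine hleibniz.trans ?_
  rcases lt_or_ge j i with hij | hij
  · rw [Nat.descFactorial_of_lt hij, zero_smul]
    refine Finset.sum_eq_zero fun m hm => ?_
    have : m ≠ i := by grind
    simp [this]
  · rw [Finset.sum_eq_single_of_mem i (by grind) fun m _ hm => by simp [hm],
      Nat.descFactorial_eq_factorial_mul_choose, mul_comm, mul_smul, if_pos rfl,
      Nat.cast_smul_eq_nsmul]

lemma iteratedDeriv_eq_factorial_smul_of_eventuallyEq_sum_add {𝕜 E : Type*}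
    [NontriviallyNormedField 𝕜] [NormedAddCommGroup E] [NormedSpace 𝕜 E] {n j : ℕ} {c : ℕ → E}
    {h f : 𝕜 → E} (hj : j < n) (hh : ContDiffAt 𝕜 j h 0)
    (hf : f =ᶠ[nhds 0] fun t => ∑ i ∈ Finset.range n, t ^ i • c i + t ^ n • h t) :
    iteratedDeriv j f 0 = j ! • c j := by
  have hmonomial (i : ℕ) : ContDiffAt 𝕜 j (fun t : 𝕜 => t ^ i • c i) 0 := by fun_prop
  rw [hf.iteratedDeriv_eq, iteratedDeriv_fun_add (by fun_prop) (by fun_prop),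
    iteratedDeriv_pow_smul_zero hh, Nat.descFactorial_of_lt hj, zero_smul, add_zero,
    iteratedDeriv_fun_sum fun i _ => hmonomial i,
    Finset.sum_eq_single_of_mem j (Finset.mem_range.2 hj)]
  · simp [iteratedDeriv_pow_smul_zero contDiffAt_const, Nat.descFactorial_self]
  · intro i _ hij
    rw [iteratedDeriv_pow_smul_zero contDiffAt_const, iteratedDeriv_const]
    rcases lt_or_gt_of_ne hij with h | h
    · simp [Nat.sub_ne_zero_of_lt h]
    · simp [Nat.descFactorial_of_lt h]

lemma isSelfAdjoint_iteratedDeriv {E : Type*} [NormedAddCommGroup E] [NormedSpace ℝ E]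
    [StarAddMonoid E] [ContinuousStar E] [StarModule ℝ E] {f : ℝ → E}
    (hf : ∀ t, IsSelfAdjoint (f t)) (j : ℕ) (t : ℝ) : IsSelfAdjoint (iteratedDeriv j f t) := by
  induction j generalizing t with
  | zero => simpa using hf t
  | succ j ih =>
    rw [iteratedDeriv_succ, isSelfAdjoint_iff, ← deriv.star]
    simp only [(ih _).star_eq]

variable {𝒜 : Type*} [NormedRing 𝒜] [NormedAlgebra ℂ 𝒜] [CompleteSpace 𝒜]

lemma eventually_isUnit_one_sub_smul_add {l : ℂ} {a : 𝒜} (b : 𝒜) (ha : IsUnit (1 - l • a)) :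
    ∀ᶠ t : ℝ in nhds 0, IsUnit (1 - l • (a + t • b)) := by
  have hcont : ContinuousAt (fun t : ℝ => 1 - l • (a + t • b)) 0 := by fun_prop
  exact hcont.eventually_mem (Units.isOpen.mem_nhds (by simpa using ha))

lemma contDiffAt_ringInverse_one_sub_smul_add {l : ℂ} {a : 𝒜} (b : 𝒜) (ha : IsUnit (1 - l • a))
    (n : WithTop ℕ∞) : ContDiffAt ℝ n (fun t : ℝ => (1 - l • (a + t • b))⁻¹ʳ) 0 := by
  obtain ⟨u, hu⟩ := ha
  have hinv : ContDiffAt ℝ n Ring.inverse (1 - l • (a + (0 : ℝ) • b)) := by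
    rw [zero_smul, add_zero, ← hu]
    exact contDiffAt_ringInverse ℝ u
  exact hinv.comp (0 : ℝ) (f := fun t : ℝ => 1 - l • (a + t • b)) (by fun_prop)

theorem powMulResolvent_eq_taylor_add {l z : ℂ} {a b : 𝒜} (ha : IsUnit (1 - l • a))
    (hz : IsUnit (1 - l • (a + z • b))) (n : ℕ) :
    powMulResolvent l n (a + z • b) =
      ∑ j ∈ Finset.range n, z ^ j •
        ((j ! : ℝ)⁻¹ • iteratedDeriv j (fun t : ℝ => powMulResolvent l n (a + t • b)) 0) +
      z ^ n • (((1 - l • a)⁻¹ʳ * b) ^ n * (1 - l • (a + z • b))⁻¹ʳ) := by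
  obtain ⟨c, hc⟩ := exists_powMulResolvent_eq_sum_add b ha n
  have hline : (fun t : ℝ => powMulResolvent l n (a + t • b)) =ᶠ[nhds 0] fun t =>
      ∑ i ∈ Finset.range n, t ^ i • c i +
        t ^ n • (((1 - l • a)⁻¹ʳ * b) ^ n * (1 - l • (a + t • b))⁻¹ʳ) := by
    filter_upwards [eventually_isUnit_one_sub_smul_add b ha] with t ht
    simpa only [← Complex.ofReal_pow, Complex.coe_smul] using hc t (by rwa [Complex.coe_smul])
  rw [hc z hz]
  congr 1
  refine Finset.sum_congr rfl fun j hj => ?_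
  rw [iteratedDeriv_eq_factorial_smul_of_eventuallyEq_sum_add (Finset.mem_range.1 hj)
      (contDiffAt_const.mul (contDiffAt_ringInverse_one_sub_smul_add b ha j)) hline,
    ← Nat.cast_smul_eq_nsmul ℝ, inv_smul_smul₀ (by positivity)]

end Taylor

section RealImaginaryPart

variable {E : Type*} [AddCommGroup E] [Module ℂ E] [StarAddMonoid E] [StarModule ℂ E]

lemma imaginaryPart_I_pow_even_smul {x : E} (hx : IsSelfAdjoint x) (m : ℕ) :
    ℑ (Complex.I ^ (2 * m) • x) = 0 := by
  have hI : Complex.I ^ (2 * m) = ((-1 : ℝ) ^ m : ℝ) := by simp [pow_mul]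
  rw [hI, Complex.coe_smul, map_smul, hx.imaginaryPart, smul_zero]

lemma imaginaryPart_I_pow_odd_smul (x : E) (m : ℕ) :
    ℑ (Complex.I ^ (2 * m + 1) • x) = (-1 : ℝ) ^ m • ℜ x := by
  have hI : Complex.I ^ (2 * m) = ((-1 : ℝ) ^ m : ℝ) := by simp [pow_mul]
  rw [pow_succ, mul_smul, hI, Complex.coe_smul, map_smul, imaginaryPart_I_smul]

lemma imaginaryPart_sum_I_pow_smul {c : ℕ → E} (hc : ∀ j, IsSelfAdjoint (c j)) (n : ℕ) :
    (ℑ (∑ j ∈ Finset.range (2 * n + 1), Complex.I ^ j • c j) : E) =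
      ∑ m ∈ Finset.Icc 1 n, (-1 : ℝ) ^ (m - 1) • c (2 * m - 1) := by
  induction n with
  | zero => simp [(hc 0).imaginaryPart]
  | succ n ih =>
    rw [show 2 * (n + 1) + 1 = 2 * n + 1 + 1 + 1 by ring, Finset.sum_range_succ,
      Finset.sum_range_succ, map_add, map_add, imaginaryPart_I_pow_odd_smul,
      show 2 * n + 1 + 1 = 2 * (n + 1) by ring, imaginaryPart_I_pow_even_smul (hc _), add_zero,
      AddSubgroup.coe_add, ih, Finset.sum_Icc_succ_top (by lia), selfAdjoint.val_smul,
      (hc _).coe_realPart]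
    rfl

variable {𝒜 : Type*} [Ring 𝒜] [StarRing 𝒜] [Algebra ℂ 𝒜] [StarModule ℂ 𝒜]

lemma realPart_star_mul_mul (y d : 𝒜) : (ℜ (star y * d * y) : 𝒜) = star y * ℜ d * y := by
  simp only [realPart_apply_coe, star_mul, star_star, mul_add, add_mul, mul_smul_comm,
    smul_mul_assoc, mul_assoc]

lemma realPart_eq_star_mul_self_of_mul_eq_one {x d : 𝒜} (hx : (ℜ x : 𝒜) = 1) (hxd : x * d = 1) :
    (ℜ d : 𝒜) = star d * d := by
  calc (ℜ d : 𝒜) = ℜ (star d) := by simp [realPart_apply_coe, add_comm]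
    _ = ℜ (star d * x * d) := by rw [mul_assoc, hxd, mul_one]
    _ = star d * d := by rw [realPart_star_mul_mul, hx, mul_one]

end RealImaginaryPart

section SelfAdjoint

variable {𝒜 : Type*} [Ring 𝒜] [StarRing 𝒜] [Algebra ℂ 𝒜] [StarModule ℂ 𝒜]

lemma isSelfAdjoint_one_sub_ofReal_smul (l : ℝ) {a : 𝒜} (ha : IsSelfAdjoint a) :
    IsSelfAdjoint (1 - (l : ℂ) • a) :=
  (IsSelfAdjoint.one 𝒜).sub ((isSelfAdjoint_iff.2 (Complex.conj_ofReal l)).smul ha)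

lemma isSelfAdjoint_powMulResolvent (l : ℝ) (n : ℕ) {a : 𝒜} (ha : IsSelfAdjoint a) :
    IsSelfAdjoint (powMulResolvent (l : ℂ) n a) :=
  ((ha.pow n).commute_iff
    (isSelfAdjoint_ringInverse (isSelfAdjoint_one_sub_ofReal_smul l ha))).1
    ((commute_ringInverse_one_sub_smul (l : ℂ) a).pow_left n)

lemma realPart_one_sub_ofReal_mul_I_smul (l : ℝ) {t : 𝒜} (ht : IsSelfAdjoint t) :
    (ℜ (1 - ((l : ℂ) * Complex.I) • t) : 𝒜) = 1 := by
  rw [map_sub, mul_smul, Complex.coe_smul, map_smul, realPart_I_smul, ht.imaginaryPart, neg_zero,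
    smul_zero, sub_zero, (IsSelfAdjoint.one 𝒜).coe_realPart]

end SelfAdjoint

section CStarAlgebra

variable {𝒜 : Type*} [CStarAlgebra 𝒜]

lemma isUnit_one_sub_ofReal_mul_I_smul (l : ℝ) {t : 𝒜} (ht : IsSelfAdjoint t) :
    IsUnit (1 - ((l : ℂ) * Complex.I) • t) := by
  refine isUnit_one_sub_smul_of_forall_mem_spectrum fun x hx h => ?_
  have hre := congrArg Complex.re h
  simp [ht.im_eq_zero_of_mem_spectrum hx] at hre

variable [PartialOrder 𝒜] [StarOrderedRing 𝒜]

lemma isUnit_one_sub_smul_add_I_smul {l : ℝ} {a b : 𝒜} (ha : IsSelfAdjoint a) (hb : 0 ≤ b)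
    (hu : IsUnit (1 - (l : ℂ) • a)) : IsUnit (1 - (l : ℂ) • (a + Complex.I • b)) := by
  obtain ⟨c, rfl⟩ := CStarAlgebra.nonneg_iff_eq_star_mul_self.1 hb
  rw [isUnit_one_sub_smul_add_smul_mul_iff hu]
  refine isUnit_one_sub_ofReal_mul_I_smul l ?_
  exact (isSelfAdjoint_ringInverse (isSelfAdjoint_one_sub_ofReal_smul l ha)).conjugate c

lemma realPart_ringInverse_mul_pow_odd_mul_ringInverse_nonneg {l : ℝ} {a b : 𝒜}
    (ha : IsSelfAdjoint a) (hb : 0 ≤ b) (hu : IsUnit (1 - (l : ℂ) • a)) (n : ℕ) :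
    0 ≤ (ℜ (((1 - (l : ℂ) • a)⁻¹ʳ * b) ^ (2 * n + 1) *
      (1 - (l : ℂ) • (a + Complex.I • b))⁻¹ʳ) : 𝒜) := by
  have hv := isUnit_one_sub_smul_add_I_smul ha hb hu
  obtain ⟨c, rfl⟩ := CStarAlgebra.nonneg_iff_eq_star_mul_self.1 hb
  have hr := isSelfAdjoint_ringInverse (isSelfAdjoint_one_sub_ofReal_smul l ha)
  rw [ringInverse_mul_pow_succ_mul_ringInverse hu hv]
  set r := (1 - (l : ℂ) • a)⁻¹ʳ
  have ht : IsSelfAdjoint (c * r * star c) := hr.conjugate c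
  set t := c * r * star c
  set d := (1 - ((l : ℂ) * Complex.I) • t)⁻¹ʳ
  have hcomm : Commute (t ^ n) d := (commute_ringInverse_one_sub_smul _ t).pow_left n
  have hconj : r * star c * (t ^ (2 * n) * d) * (c * r) =
      star (t ^ n * (c * r)) * d * (t ^ n * (c * r)) := by
    rw [two_mul, pow_add, mul_assoc (t ^ n), hcomm.eq]
    simp only [star_mul, (ht.pow n).star_eq, hr.star_eq, mul_assoc]
  have hreal : (ℜ d : 𝒜) = star d * d :=
    realPart_eq_star_mul_self_of_mul_eq_one (realPart_one_sub_ofReal_mul_I_smul l ht)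
      (Ring.mul_inverse_cancel _ (isUnit_one_sub_ofReal_mul_I_smul l ht))
  rw [hconj, realPart_star_mul_mul, hreal]
  exact star_left_conjugate_nonneg (star_mul_self_nonneg d) _

theorem imaginaryPart_powMulResolvent_add_I_smul {l : ℝ} {a b : 𝒜} (ha : IsSelfAdjoint a)
    (hb : 0 ≤ b) (hu : IsUnit (1 - (l : ℂ) • a)) (n : ℕ) :
    (ℑ (powMulResolvent (l : ℂ) (2 * n + 1) (a + Complex.I • b)) : 𝒜) =
      ∑ m ∈ Finset.Icc 1 n, ((-1 : ℝ) ^ (m - 1) / (2 * m - 1)!) •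
        iteratedDeriv (2 * m - 1)
          (fun t : ℝ => powMulResolvent (l : ℂ) (2 * n + 1) (a + t • b)) 0 +
      (-1 : ℝ) ^ n • (ℜ (((1 - (l : ℂ) • a)⁻¹ʳ * b) ^ (2 * n + 1) *
        (1 - (l : ℂ) • (a + Complex.I • b))⁻¹ʳ) : 𝒜) := by
  have hline (t : ℝ) :
      IsSelfAdjoint (powMulResolvent (l : ℂ) (2 * n + 1) (a + t • b)) :=
    isSelfAdjoint_powMulResolvent l _ (ha.add ((IsSelfAdjoint.all t).smul (.of_nonneg hb)))
  have hcoeff (j : ℕ) :=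
    (IsSelfAdjoint.all (j ! : ℝ)⁻¹).smul (isSelfAdjoint_iteratedDeriv hline j 0)
  rw [powMulResolvent_eq_taylor_add hu (isUnit_one_sub_smul_add_I_smul ha hb hu), map_add,
    AddSubgroup.coe_add, imaginaryPart_sum_I_pow_smul hcoeff, imaginaryPart_I_pow_odd_smul,
    selfAdjoint.val_smul]
  simp only [smul_smul, div_eq_mul_inv]

theorem stmt7_general {k : ℕ} (hk : 1 ≤ k) {l : ℝ} {a b : 𝒜} (ha : IsSelfAdjoint a) (hb : 0 ≤ b)
    (hu : IsUnit (1 - (l : ℂ) • a)) :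
    IsUnit (1 - (l : ℂ) • (a + Complex.I • b)) ∧
    (∃ δ > (0 : ℝ), ∀ t : ℝ, |t| < δ → IsUnit (1 - (l : ℂ) • (a + t • b))) ∧
    (Odd k →
      ∑ m ∈ Finset.Icc 1 (k - 1), ((-1 : ℝ) ^ (m - 1) / (2 * m - 1)!) •
          iteratedDeriv (2 * m - 1)
            (fun t : ℝ => powMulResolvent (l : ℂ) (2 * k - 1) (a + t • b)) 0 ≤
        (ℑ (powMulResolvent (l : ℂ) (2 * k - 1) (a + Complex.I • b)) : 𝒜)) ∧
    (Even k →
      (ℑ (powMulResolvent (l : ℂ) (2 * k - 1) (a + Complex.I • b)) : 𝒜) ≤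
        ∑ m ∈ Finset.Icc 1 (k - 1), ((-1 : ℝ) ^ (m - 1) / (2 * m - 1)!) •
          iteratedDeriv (2 * m - 1)
            (fun t : ℝ => powMulResolvent (l : ℂ) (2 * k - 1) (a + t • b)) 0) := by
  obtain ⟨n, rfl⟩ := Nat.exists_eq_add_of_le' hk
  have hexponent : 2 * (n + 1) - 1 = 2 * n + 1 := by lia
  have hremainder := realPart_ringInverse_mul_pow_odd_mul_ringInverse_nonneg ha hb hu n
  rw [hexponent, Nat.add_sub_cancel, imaginaryPart_powMulResolvent_add_I_smul ha hb hu]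
  refine ⟨isUnit_one_sub_smul_add_I_smul ha hb hu, ?_, fun hodd => ?_, fun heven => ?_⟩
  · simpa using Metric.eventually_nhds_iff.1 (eventually_isUnit_one_sub_smul_add b hu)
  · have hn : Even n := by grind
    simpa [hn.neg_one_pow] using hremainder
  · have hn : Odd n := by grind
    simpa [hn.neg_one_pow] using hremainder

end CStarAlgebra

lemma opIm_eq_imaginaryPart (Y : H →L[ℂ] H) : opIm Y = ℑ Y := by
  rw [opIm, imaginaryPart_apply_coe, ← Complex.coe_smul, smul_smul]
  congr 1
  simp [mul_comm]

/-- Lemma 3.4 of the paper: for `k ≥ 1`, `λ ∈ [−1,1]`, self-adjoint `A, B` with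
`σ(A) ⊆ (−1,1)`, `B` positive semidefinite and `X = A + iB`, the operators `I − λX` and
`I − λ(A+tB)` (for `t` near `0`) are invertible and, with `D^{2m−1}g(A;B)` the `(2m−1)`-th
derivative at `t = 0` of `t ↦ (A+tB)^{2k−1} (I − λ(A+tB))⁻¹`, one has
`Im{X^{2k−1}(I−λX)⁻¹} ≥ Σ_{m=1}^{k−1} ((−1)^{m−1}/(2m−1)!) D^{2m−1}g(A;B)` if `k` is odd
(the sum being `0` for `k = 1`) and the reverse inequality if `k` is even. -/
theorem stmt7 [TopologicalSpace.SeparableSpace H] (hinf : ¬ FiniteDimensional ℂ H)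
    (k : ℕ) (hk : 1 ≤ k) (l : ℝ) (hl : l ∈ Set.Icc (-1 : ℝ) 1)
    (A B X : H →L[ℂ] H) (hA : IsSelfAdjoint A) (hB : IsSelfAdjoint B)
    (hBpos : B.IsPositive)
    (hspA : spectrum ℂ A ⊆ (fun x : ℝ => (x : ℂ)) '' Set.Ioo (-1 : ℝ) 1)
    (hX : X = A + Complex.I • B) :
    IsUnit (1 - (l : ℂ) • X) ∧
    (∃ δ > (0 : ℝ), ∀ t : ℝ, |t| < δ → IsUnit (1 - (l : ℂ) • (A + t • B))) ∧
    (Odd k →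
      (opIm (X ^ (2 * k - 1) * Ring.inverse (1 - (l : ℂ) • X))
        - ∑ m ∈ Finset.Icc 1 (k - 1),
            ((-1 : ℝ) ^ (m - 1) / (Nat.factorial (2 * m - 1) : ℝ)) •
              iteratedDeriv (2 * m - 1)
                (fun t : ℝ =>
                  (A + t • B) ^ (2 * k - 1) * Ring.inverse (1 - (l : ℂ) • (A + t • B)))
                0).IsPositive) ∧
    (Even k →
      ((∑ m ∈ Finset.Icc 1 (k - 1),
          ((-1 : ℝ) ^ (m - 1) / (Nat.factorial (2 * m - 1) : ℝ)) •
            iteratedDeriv (2 * m - 1)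
              (fun t : ℝ =>
                (A + t • B) ^ (2 * k - 1) * Ring.inverse (1 - (l : ℂ) • (A + t • B))) 0)
        - opIm (X ^ (2 * k - 1) * Ring.inverse (1 - (l : ℂ) • X))).IsPositive) := by
  subst hX
  simp only [opIm_eq_imaginaryPart, ← le_def]
  exact stmt7_general hk hA ((nonneg_iff_isPositive B).2 hBpos)
    (isUnit_one_sub_ofReal_smul_of_spectrum_subset hl hspA)
end

section
/- Let k ∈ ℕ and set l := 4k − 2. Let P be a polynomial with real coefficients of degree < l and let μ be a finite positive Borel measure on [−1, 1]. Let A, B be bounded self-adjoint operators on H with the spectrum of A contained in (−1, 1), and set X := A + iB. Then for every λ ∈ [−1, 1] the operators I − λX and I − λ(A + tB) (for real t near 0) are invertible, the Bochner integrals defining f(Y) := P(Y) + ∫_{[−1,1]} Y^{l} (I − λY)^{-1} dμ(λ) exist for Y = X and Y = A + tB, and Re f(X) ≤ Σ_{m=0}^{2k−2} ((−1)^m / (2m)!) · D^{2m}f(A;B), where D^{m}f(A;B) denotes the m-th derivative at t = 0 of the map t ↦ f(A + tB). -/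
open ContinuousLinearMap MeasureTheory

variable {H : Type*} [NormedAddCommGroup H] [InnerProductSpace ℂ H] [CompleteSpace H]

/-- The operator function `Y ↦ P(Y) + ∫_{[−1,1]} Y^l (I − λY)⁻¹ dμ(λ)`, the integral
representation of an operator `l`-tone function on `(−1,1)`. -/
noncomputable def fcal (P : Polynomial ℝ) (μ : Measure ℝ) (l : ℕ) (Y : H →L[ℂ] H) :
    H →L[ℂ] H :=
  Polynomial.aeval Y (P.map Complex.ofRealHom) +
    ∫ s, Y ^ l * Ring.inverse (1 - (s : ℂ) • Y) ∂μ

/-!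
Work in the Banach algebra of continuous `B(H)`-valued functions of `λ ∈ [-1, 1]`, and let `g` be
the inverse of `1 - λA`. Iterating the resolvent identity gives, for `l = 2n` and every complex `z`
for which the inverses exist,
`(A + zB)^l (1 - λ(A + zB))⁻¹ = ∑_{j<l} z^j c_j + z^l (gB)^l (1 - λ(A + zB))⁻¹`,
and `P(A + zB)` only contributes to the coefficients `c_j`. Derivatives at `0` along real `z` read
off the `c_j` with `j < l`. Averaging over `z = i` and `z = -i` keeps exactly the even ones, with
the signs of the theorem, and leaves the remainder `(-1)^n (gB)^{2n} (r + r*) / 2`, where `r` is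
the inverse of `1 - λX`. Since `r` intertwines `Bg` and `gB`, this is `(-1)^n / 2` times
`(gB)^n (r + r*) ((gB)^n)*`, and `r + r* = r (w + w*) r*` with `w + w* = 2(1 - λA) ≥ 0` for
`w = 1 - λX`. The paper's inequality is the case of odd `n = 2k - 1`.
-/

open Filter Finset Polynomial Topology
open scoped Ring

section Algebra

variable {R : Type*} [Ring R]

theorem commute_ringInverse_right_s8 {a b : R} (h : Commute a b) : Commute a b⁻¹ʳ := by
  by_cases hb : IsUnit b
  · obtain ⟨u, rfl⟩ := hb
    simpa only [Ring.inverse_unit] using h.units_inv_right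
  · simpa only [Ring.inverse_non_unit _ hb] using Commute.zero_right a

theorem commute_one_sub_mul_self {c : R} (hc : ∀ y, Commute c y) (x : R) :
    Commute x (1 - c * x) :=
  (Commute.one_right x).sub_right ((hc x).symm.mul_right (Commute.refl x))

theorem mul_pow_eq_sum_add {r x y h : R} (hr : r * x = h + y * r) (n : ℕ) :
    r * x ^ n = ∑ m ∈ range n, y ^ m * h * x ^ (n - 1 - m) + y ^ n * r := by
  induction n with
  | zero => simp
  | succ n ih =>
    have hsum : (∑ m ∈ range n, y ^ m * h * x ^ (n - 1 - m)) * x =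
        ∑ m ∈ range n, y ^ m * h * x ^ (n - m) := by
      rw [sum_mul]
      refine sum_congr rfl fun m hm ↦ ?_
      have hm' : n - m = n - 1 - m + 1 := by have := mem_range.mp hm; omega
      rw [hm', pow_succ, mul_assoc]
    rw [pow_succ, ← mul_assoc, ih, add_mul, hsum, mul_assoc, hr, sum_range_succ]
    simp only [Nat.add_sub_cancel, Nat.sub_self, pow_zero, mul_one, mul_add, pow_succ, mul_assoc]
    abel

theorem ringInverse_one_sub_mul_mul {c a x : R} (hc : ∀ y, Commute c y)
    (ha : IsUnit (1 - c * a)) (hx : IsUnit (1 - c * x)) :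
    (1 - c * x)⁻¹ʳ * x =
      (1 - c * a)⁻¹ʳ * a + (1 - c * a)⁻¹ʳ * (x - a) * (1 - c * x)⁻¹ʳ := by
  have hnum : (1 - c * a) * x = a * (1 - c * x) + (x - a) := by
    rw [sub_mul, mul_sub, ← mul_assoc a, ← (hc a).eq, one_mul, mul_one]
    noncomm_ring
  have hcomm := commute_ringInverse_right_s8 (commute_one_sub_mul_self hc x)
  refine ha.mul_left_cancel ?_
  rw [← hcomm.eq, ← mul_assoc, hnum, mul_add, ← mul_assoc, ← mul_assoc, ← mul_assoc,
    Ring.mul_inverse_cancel _ ha, one_mul, one_mul, add_mul, mul_assoc,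
    Ring.mul_inverse_cancel _ hx, mul_one]

variable {S : Type*} [CommRing S] [Algebra S R]

/-- Evaluation of a polynomial with noncommuting coefficients at a scalar `z : S`; it is
multiplicative because scalars are central. -/
noncomputable def evalScalar (z : S) : R[X] →ₐ[S] R :=
  eval₂AlgHom (AlgHom.id S R) (algebraMap S R z) fun r ↦ Algebra.commute_algebraMap_right z r

@[simp]
theorem evalScalar_C (z : S) (r : R) : evalScalar z (C r) = r :=
  eval₂_C _ _

@[simp]
theorem evalScalar_X (z : S) : evalScalar z (X : R[X]) = algebraMap S R z :=
  eval₂_X _ _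

theorem evalScalar_line (z : S) (a b : R) : evalScalar z (C b * X + C a) = a + z • b := by
  rw [map_add, map_mul, evalScalar_C, evalScalar_C, evalScalar_X, ← Algebra.commutes,
    ← Algebra.smul_def, add_comm]

theorem evalScalar_eq_sum {n : ℕ} {p : R[X]} (hp : p ∈ degreeLT R n) (z : S) :
    evalScalar z p = ∑ j ∈ range n, z ^ j • p.coeff j := by
  calc evalScalar z p = p.sum fun j r ↦ r * algebraMap S R z ^ j := eval₂_eq_sum
    _ = p.sum fun j r ↦ z ^ j • r := by
      simp only [← map_pow, ← Algebra.commutes, ← Algebra.smul_def]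
    _ = ∑ j ∈ range n, z ^ j • p.coeff j :=
      sum_eq_of_subset _ (by simp) fun j hj ↦
        mem_range.mpr <| WithBot.coe_lt_coe.mp <|
          (le_degree_of_mem_supp j hj).trans_lt (mem_degreeLT.mp hp)

theorem degree_line_pow_le (a b : R) (m : ℕ) : degree ((C b * X + C a) ^ m) ≤ m := by
  simpa using degree_pow_le_of_le m (degree_linear_le (a := b) (b := a))

theorem aeval_line_mem_degreeLT (a b : R) {n : ℕ} {P : S[X]} (hP : P.degree < n) :
    aeval (C b * X + C a : R[X]) P ∈ degreeLT R n := by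
  rw [aeval_eq_sum_range]
  refine Submodule.sum_mem _ fun i _ ↦ ?_
  rcases eq_or_ne (P.coeff i) 0 with hi | hi
  · simp only [hi, zero_smul, Submodule.zero_mem]
  · exact mem_degreeLT.mpr <| (degree_smul_le _ _).trans_lt <|
      (degree_line_pow_le a b i).trans_lt <| (le_degree_of_ne_zero hi).trans_lt hP

theorem exists_coeff_aeval_line (a b : R) {n : ℕ} {P : S[X]} (hP : P.degree < n) :
    ∃ c : ℕ → R, ∀ z : S, aeval (a + z • b) P = ∑ j ∈ range n, z ^ j • c j :=
  ⟨(aeval (C b * X + C a : R[X]) P).coeff, fun z ↦ by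
    rw [← evalScalar_eq_sum (aeval_line_mem_degreeLT a b hP), ← evalScalar_line z a b,
      aeval_algHom_apply]⟩

theorem exists_coeff_sum_pow_mul_pow (a b h k : R) (n : ℕ) :
    ∃ c : ℕ → R, ∀ z : S,
      ∑ m ∈ range n, (z • k) ^ m * h * (a + z • b) ^ (n - 1 - m) =
        ∑ j ∈ range n, z ^ j • c j := by
  let q (m : ℕ) : R[X] := (C k * X + C 0) ^ m * C h * (C b * X + C a) ^ (n - 1 - m)
  have hq : ∑ m ∈ range n, q m ∈ degreeLT R n := by
    refine Submodule.sum_mem _ fun m hm ↦ mem_degreeLT.mpr ?_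
    have hdeg : degree (q m) ≤ ((m + 0 + (n - 1 - m) : ℕ) : WithBot ℕ) :=
      degree_mul_le_of_le (degree_mul_le_of_le (degree_line_pow_le 0 k m) degree_C_le)
        (degree_line_pow_le a b _)
    have hlt : m + 0 + (n - 1 - m) < n := by have := mem_range.mp hm; omega
    exact hdeg.trans_lt (by exact_mod_cast hlt)
  refine ⟨(∑ m ∈ range n, q m).coeff, fun z ↦ ?_⟩
  rw [← evalScalar_eq_sum hq, map_sum]
  refine sum_congr rfl fun m _ ↦ ?_
  rw [map_mul, map_mul, map_pow, map_pow, evalScalar_line, evalScalar_line, evalScalar_C, zero_add]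

theorem exists_coeff_pow_mul_ringInverse {c a : R} (hc : ∀ y, Commute c y)
    (ha : IsUnit (1 - c * a)) (b : R) (n : ℕ) :
    ∃ p : ℕ → R, ∀ z : S, IsUnit (1 - c * (a + z • b)) →
      (a + z • b) ^ n * (1 - c * (a + z • b))⁻¹ʳ =
        ∑ j ∈ range n, z ^ j • p j +
          z ^ n • (((1 - c * a)⁻¹ʳ * b) ^ n * (1 - c * (a + z • b))⁻¹ʳ) := by
  obtain ⟨p, hp⟩ := exists_coeff_sum_pow_mul_pow (S := S) a b
    ((1 - c * a)⁻¹ʳ * a) ((1 - c * a)⁻¹ʳ * b) n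
  refine ⟨p, fun z hz ↦ ?_⟩
  have hresolvent := ringInverse_one_sub_mul_mul hc ha hz
  rw [add_sub_cancel_left, mul_smul_comm] at hresolvent
  rw [((commute_ringInverse_right_s8 (commute_one_sub_mul_self hc _)).pow_left n).eq,
    mul_pow_eq_sum_add hresolvent, hp, _root_.smul_pow, smul_mul_assoc]

theorem semiconjBy_ringInverse_add_smul {d b : R} {c : S} (hd : IsUnit d)
    (hw : IsUnit (d + c • b)) : SemiconjBy (d + c • b)⁻¹ʳ (b * d⁻¹ʳ) (d⁻¹ʳ * b) := by
  have hconj : (d + c • b) * (d⁻¹ʳ * b) = b * d⁻¹ʳ * (d + c • b) := by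
    rw [add_mul, Ring.mul_inverse_cancel_left _ _ hd, mul_add,
      Ring.inverse_mul_cancel_right _ _ hd, smul_mul_assoc, mul_smul_comm, mul_assoc]
  refine hw.mul_left_cancel ?_
  rw [Ring.mul_inverse_cancel_left _ _ hw, ← mul_assoc, hconj,
    Ring.mul_inverse_cancel_right _ _ hw]

end Algebra

section Taylor

variable {E : Type*} [NormedAddCommGroup E] [NormedSpace ℝ E]

theorem iteratedDeriv_pow_smul_const_zero (n j : ℕ) (c : E) :
    iteratedDeriv n (fun t : ℝ ↦ t ^ j • c) 0 = if n = j then (n.factorial : ℝ) • c else 0 := by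
  rw [iteratedDeriv_smul_const (by fun_prop), iteratedDeriv_fun_pow_zero]
  split_ifs with h <;> simp [h]

theorem iteratedDeriv_pow_smul_zero_of_lt {n l : ℕ} (hn : n < l) {r : ℝ → E}
    (hr : ContDiffAt ℝ n r 0) : iteratedDeriv n (fun t : ℝ ↦ t ^ l • r t) 0 = 0 := by
  have leibniz := iteratedDerivWithin_smul (f := fun t : ℝ ↦ t ^ l) (Set.mem_univ (0 : ℝ))
    uniqueDiffOn_univ (by fun_prop) hr.contDiffWithinAt
  simp only [iteratedDerivWithin_univ] at leibniz
  refine leibniz.trans (sum_eq_zero fun i hi ↦ ?_)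
  have hil : i ≠ l := by have := mem_range.mp hi; omega
  rw [iteratedDeriv_fun_pow_zero, if_neg hil]
  simp

theorem iteratedDeriv_zero_eq_factorial_smul {l : ℕ} {f r : ℝ → E} {c : ℕ → E}
    (hr : ContDiffAt ℝ l r 0)
    (hf : f =ᶠ[𝓝 0] fun t ↦ ∑ j ∈ range l, t ^ j • c j + t ^ l • r t) {n : ℕ} (hn : n < l) :
    iteratedDeriv n f 0 = (n.factorial : ℝ) • c n := by
  have hr' : ContDiffAt ℝ n r 0 := hr.of_le (by exact_mod_cast hn.le)
  rw [hf.iteratedDeriv_eq, iteratedDeriv_fun_add (by fun_prop) (by fun_prop),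
    iteratedDeriv_fun_sum (by intros; fun_prop), iteratedDeriv_pow_smul_zero_of_lt hn hr']
  simp [iteratedDeriv_pow_smul_const_zero, hn]

end Taylor

section Parity

variable {E : Type*}

theorem sum_I_pow_smul_add_sum_neg_I_pow_smul [AddCommGroup E] [Module ℂ E] (c : ℕ → E) (n : ℕ) :
    ∑ j ∈ range (2 * n), Complex.I ^ j • c j + ∑ j ∈ range (2 * n), (-Complex.I) ^ j • c j =
      (2 : ℂ) • ∑ m ∈ range n, (-1 : ℂ) ^ m • c (2 * m) := by
  induction n with
  | zero => simp
  | succ n ih =>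
    have hI : Complex.I ^ (2 * n) = (-1) ^ n := by rw [pow_mul, Complex.I_sq]
    have hI' : (-Complex.I) ^ (2 * n) = (-1) ^ n := by rw [pow_mul, neg_sq, Complex.I_sq]
    simp only [mul_add_one, sum_range_succ, smul_add, ← ih, pow_succ, hI, hI', mul_neg, neg_smul,
      two_smul]
    abel

theorem half_add_sub_sum_iteratedDeriv [NormedAddCommGroup E] [NormedSpace ℂ E] {f r : ℂ → E}
    {c : ℕ → E} {n : ℕ} {s : Set ℂ} (hs : s ∈ 𝓝 0) (hI : Complex.I ∈ s) (hI' : -Complex.I ∈ s)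
    (hf : ∀ z ∈ s, f z = ∑ j ∈ range (2 * n), z ^ j • c j + z ^ (2 * n) • r z)
    (hr : ContDiffAt ℝ (2 * n : ℕ) (fun t : ℝ ↦ r t) 0) :
    (2 : ℂ)⁻¹ • (f Complex.I + f (-Complex.I)) - ∑ m ∈ range n,
        ((-1 : ℝ) ^ m / (2 * m).factorial) • iteratedDeriv (2 * m) (fun t : ℝ ↦ f t) 0 =
      (-1 : ℝ) ^ n • (2 : ℝ)⁻¹ • (r Complex.I + r (-Complex.I)) := by
  have hreal : (fun t : ℝ ↦ f t) =ᶠ[𝓝 0]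
      fun t ↦ ∑ j ∈ range (2 * n), t ^ j • c j + t ^ (2 * n) • r t := by
    have hs' : ∀ᶠ t : ℝ in 𝓝 0, (t : ℂ) ∈ s :=
      Complex.continuous_ofReal.continuousAt.eventually (by simpa using hs)
    filter_upwards [hs'] with t ht
    simp only [hf t ht, ← Complex.ofReal_pow, Complex.coe_smul]
  have hderiv : ∑ m ∈ range n,
        ((-1 : ℝ) ^ m / (2 * m).factorial) • iteratedDeriv (2 * m) (fun t : ℝ ↦ f t) 0 =
      ∑ m ∈ range n, (-1 : ℂ) ^ m • c (2 * m) := by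
    refine sum_congr rfl fun m hm ↦ ?_
    have hm' : 2 * m < 2 * n := by have := mem_range.mp hm; omega
    rw [iteratedDeriv_zero_eq_factorial_smul hr hreal hm', smul_smul,
      div_mul_cancel₀ _ (by positivity), ← Complex.coe_smul]
    simp
  have hpow : (-1 : ℂ) ^ n = ((-1 : ℝ) ^ n : ℝ) := by simp
  have htwo : (2 : ℂ)⁻¹ = ((2 : ℝ)⁻¹ : ℝ) := by simp
  rw [hf _ hI, hf _ hI', add_add_add_comm, sum_I_pow_smul_add_sum_neg_I_pow_smul, hderiv,
    pow_mul, pow_mul, neg_sq, Complex.I_sq, hpow, Complex.coe_smul, Complex.coe_smul, ← smul_add,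
    smul_add, smul_smul, inv_mul_cancel₀ two_ne_zero, one_smul, add_sub_cancel_left, smul_comm,
    htwo, Complex.coe_smul]

end Parity

section StarOrderedRing

variable {R : Type*} [Ring R] [PartialOrder R] [StarRing R] [StarOrderedRing R]

theorem ringInverse_add_star_nonneg {w : R} (hw : IsUnit w) (h : 0 ≤ w + star w) :
    0 ≤ w⁻¹ʳ + star w⁻¹ʳ := by
  have hconj : w⁻¹ʳ * (w + star w) * star w⁻¹ʳ = w⁻¹ʳ + star w⁻¹ʳ := by
    rw [mul_add, Ring.inverse_mul_cancel _ hw, add_mul, one_mul, mul_assoc, ← star_mul,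
      Ring.inverse_mul_cancel _ hw, star_one, mul_one, add_comm]
  exact hconj ▸ star_right_conjugate_nonneg h _

variable {S : Type*} [CommRing S] [StarRing S] [Algebra S R] [StarModule S R]

theorem pow_mul_ringInverse_add_star_nonneg {d b : R} {c : S} (hd : 0 ≤ d) (hd' : IsUnit d)
    (hb : IsSelfAdjoint b) (hc : star c = -c) (hw : IsUnit (d + c • b)) (n : ℕ) :
    0 ≤ (d⁻¹ʳ * b) ^ (2 * n) * ((d + c • b)⁻¹ʳ + star (d + c • b)⁻¹ʳ) := by
  have hstar : star (d + c • b) = d + (-c) • b := by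
    rw [star_add, star_smul, hc, hd.isSelfAdjoint.star_eq, hb.star_eq]
  have hsemi := (semiconjBy_ringInverse_add_smul hd' hw).add_left <|
    semiconjBy_ringInverse_add_smul (c := -c) hd' (hstar ▸ hw.star)
  rw [← hstar, Ring.inverse_star] at hsemi
  have hpow : star ((d⁻¹ʳ * b) ^ n) = (b * d⁻¹ʳ) ^ n := by
    rw [star_pow, star_mul, hb.star_eq, hd.isSelfAdjoint.ringInverse.star_eq]
  have hre : 0 ≤ (d + c • b) + star (d + c • b) := by
    rw [hstar, neg_smul, add_add_add_comm, add_neg_cancel, add_zero]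
    exact add_nonneg hd hd
  rw [two_mul, pow_add, mul_assoc, ← (hsemi.pow_right n).eq, ← mul_assoc, ← hpow]
  exact star_right_conjugate_nonneg (ringInverse_add_star_nonneg hw hre) _

end StarOrderedRing

section CStarAlgebra

variable {𝓐 : Type*} [CStarAlgebra 𝓐]

theorem norm_lt_of_forall_mem_spectrum_norm_lt {a : 𝓐} (ha : IsSelfAdjoint a) {r : ℝ} (hr : 0 < r)
    (h : ∀ z ∈ spectrum ℂ a, ‖z‖ < r) : ‖a‖ < r := by
  rcases subsingleton_or_nontrivial 𝓐 with _ | _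
  · rwa [Subsingleton.elim a 0, norm_zero]
  lift r to NNReal using hr.le
  have hradius := spectrum.spectralRadius_lt_of_forall_lt a (r := r) h
  rw [ha.spectralRadius_eq_nnnorm] at hradius
  exact_mod_cast hradius

variable [PartialOrder 𝓐] [StarOrderedRing 𝓐]

theorem isStrictlyPositive_one_sub {a : 𝓐} (ha : IsSelfAdjoint a) (ha' : ‖a‖ < 1) :
    IsStrictlyPositive (1 - a) := by
  refine (isUnit_one_sub_of_norm_lt_one ha').isStrictlyPositive (sub_nonneg.mpr ?_)
  calc a ≤ algebraMap ℝ 𝓐 ‖a‖ := ha.le_algebraMap_norm_self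
    _ ≤ algebraMap ℝ 𝓐 1 := algebraMap_mono 𝓐 ha'.le
    _ = 1 := map_one _

theorem isUnit_add_I_smul_s8 {d k : 𝓐} (hd : IsStrictlyPositive d) (hk : IsSelfAdjoint k) :
    IsUnit (d + Complex.I • k) := by
  set q := CFC.sqrt d
  have hq : IsUnit q := hd.isUnit_cfcSqrt
  have hqs : IsSelfAdjoint q := (CFC.sqrt_nonneg d).isSelfAdjoint
  have hqq : q * q = d := CFC.sqrt_mul_sqrt_self d hd.nonneg
  have hk' : IsSelfAdjoint (q⁻¹ʳ * k * q⁻¹ʳ) := by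
    simpa [hqs.ringInverse.star_eq] using hk.conjugate q⁻¹ʳ
  have hmid : IsUnit (1 + Complex.I • (q⁻¹ʳ * k * q⁻¹ʳ)) := by
    have hI : Complex.I ∉ spectrum ℂ (q⁻¹ʳ * k * q⁻¹ʳ) := fun h ↦ by
      simpa using hk'.im_eq_zero_of_mem_spectrum h
    have hshift : 1 + Complex.I • (q⁻¹ʳ * k * q⁻¹ʳ) =
        algebraMap ℂ 𝓐 (-Complex.I) * (algebraMap ℂ 𝓐 Complex.I - q⁻¹ʳ * k * q⁻¹ʳ) := by
      rw [mul_sub, ← map_mul, ← Algebra.smul_def]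
      simp
    rw [hshift]
    exact (IsUnit.map _ (by simp)).mul (spectrum.notMem_iff.mp hI)
  have hfactor : d + Complex.I • k = q * (1 + Complex.I • (q⁻¹ʳ * k * q⁻¹ʳ)) * q := by
    have hkq : q * (q⁻¹ʳ * k * q⁻¹ʳ) * q = k := by
      rw [mul_assoc q⁻¹ʳ, Ring.mul_inverse_cancel_left _ _ hq, Ring.inverse_mul_cancel_right _ _ hq]
    rw [mul_add, add_mul, mul_one, hqq, mul_smul_comm, smul_mul_assoc, hkq]
  exact hfactor ▸ (hq.mul hmid).mul hq

end CStarAlgebra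

section Pencil

variable {K : Set ℝ} {𝓐 : Type*} [NormedRing 𝓐] [NormedAlgebra ℂ 𝓐]

/-- The central element `s ↦ s • 1` of `C(K, 𝓐)`: it lets resolvent identities in a ring with a
central parameter apply to the whole family of resolvents indexed by `K` at once. -/
noncomputable def scalarCoordinate (K : Set ℝ) (𝓐 : Type*) [NormedRing 𝓐] [NormedAlgebra ℂ 𝓐] :
    C(K, 𝓐) :=
  ⟨fun s ↦ algebraMap ℂ 𝓐 s, by fun_prop⟩

theorem commute_scalarCoordinate (f : C(K, 𝓐)) : Commute (scalarCoordinate K 𝓐) f :=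
  ContinuousMap.ext fun _ ↦ Algebra.commutes _ _

/-- The family `s ↦ 1 - s • Y`, `s ∈ K`, as one element of the algebra `C(K, 𝓐)`; it is
invertible there exactly when each of its values is. -/
noncomputable def pencil (K : Set ℝ) (Y : 𝓐) : C(K, 𝓐) :=
  1 - scalarCoordinate K 𝓐 * .const K Y

theorem pencil_apply (Y : 𝓐) (s : K) : pencil K Y s = 1 - ((s : ℝ) : ℂ) • Y := by
  simp [pencil, scalarCoordinate, Algebra.smul_def]

theorem continuousMap_ringInverse_apply {X R : Type*} [TopologicalSpace X] [TopologicalSpace R]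
    [Ring R] [IsTopologicalRing R] {f : C(X, R)} (hf : IsUnit f) (x : X) : f⁻¹ʳ x = (f x)⁻¹ʳ := by
  obtain ⟨u, rfl⟩ := hf
  rw [Ring.inverse_unit]
  exact (Ring.inverse_unit <|
    Units.map ((Pi.evalMonoidHom _ x).comp ContinuousMap.coeFnMonoidHom) u).symm

theorem pow_mul_ringInverse_eq_continuousMap {Y : 𝓐} (hY : IsUnit (pencil K Y)) (l : ℕ) :
    (fun s : K ↦ Y ^ l * (1 - ((s : ℝ) : ℂ) • Y)⁻¹ʳ) =
      (.const K Y ^ l * (pencil K Y)⁻¹ʳ : C(K, 𝓐)) := by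
  ext s
  simp [continuousMap_ringInverse_apply hY, pencil_apply]

theorem isUnit_pencil_iff [CompleteSpace 𝓐] {Y : 𝓐} :
    IsUnit (pencil K Y) ↔ ∀ s ∈ K, IsUnit (1 - (s : ℂ) • Y) := by
  simp only [ContinuousMap.isUnit_iff_forall_isUnit, pencil_apply, Subtype.forall]

end Pencil

section Integration

variable {X E : Type*} [TopologicalSpace X] [CompactSpace X] [MeasurableSpace X] [BorelSpace X]
  [NormedAddCommGroup E] [NormedSpace ℂ E] [SecondCountableTopologyEither X E]
  [CompleteSpace E] (ν : Measure X) [IsFiniteMeasure ν]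

/-- Integration against a finite measure `ν`, as a bounded linear map on continuous functions on
a compact space; in this form differentiation passes through the integral. -/
noncomputable def integralContinuousMap : C(X, E) →L[ℂ] E :=
  L1.integralCLM' ℂ ∘L ContinuousMap.toLp 1 ν ℂ

theorem integralContinuousMap_apply (f : C(X, E)) : integralContinuousMap ν f = ∫ x, f x ∂ν :=
  calc integralContinuousMap ν f = L1.integral (ContinuousMap.toLp 1 ν ℂ f) :=
      (L1.integral_eq' (𝕜 := ℂ) _).symm
    _ = ∫ x, f x ∂ν :=
      (L1.integral_eq_integral _).trans (integral_congr_ae (ContinuousMap.coeFn_toLp ν f))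

end Integration

section Resolvent

variable {K : Set ℝ} [CompactSpace K]

section Banach

variable {𝓐 : Type*} [NormedRing 𝓐] [NormedAlgebra ℂ 𝓐] {μ : Measure ℝ} [IsFiniteMeasure μ]

theorem integrable_pow_mul_ringInverse (hK : MeasurableSet K) (hμ : μ Kᶜ = 0) {Y : 𝓐}
    (hY : IsUnit (pencil K Y)) (l : ℕ) :
    Integrable (fun s : ℝ ↦ Y ^ l * (1 - (s : ℂ) • Y)⁻¹ʳ) μ := by
  rw [← Measure.restrict_eq_self_of_ae_mem (mem_ae_iff.mpr hμ)]
  refine (integrableOn_iff_comap_subtypeVal hK).mpr ?_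
  exact ((ContinuousMap.continuous _).integrable_of_hasCompactSupport (.of_compactSpace _)).congr
    (.of_eq (pow_mul_ringInverse_eq_continuousMap hY l).symm)

variable [CompleteSpace 𝓐]

theorem setOf_isUnit_pencil_mem_nhds_zero {A : 𝓐} (hA : IsUnit (pencil K A)) (B : 𝓐) :
    {z : ℂ | IsUnit (pencil K (A + z • B))} ∈ 𝓝 0 := by
  have hcont : Continuous fun z : ℂ ↦ pencil K (A + z • B) :=
    continuous_const.sub <| continuous_const.mul <|
      ContinuousMap.continuous_const'.comp (by fun_prop)
  exact (Units.isOpen.preimage hcont).mem_nhds (by simpa using hA)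

/-- The remainder `∫ (g B) ^ l (1 - s (A + z B))⁻¹ dν(s)`, where `g = (1 - s A)⁻¹`, in the
order-`l` expansion of `z ↦ ∫ (A + z B) ^ l (1 - s (A + z B))⁻¹ dν(s)` at `0`, without its factor
`z ^ l`. -/
noncomputable def resolventRemainder (ν : Measure K) [IsFiniteMeasure ν] (l : ℕ) (A B : 𝓐)
    (z : ℂ) : 𝓐 :=
  integralContinuousMap ν
    (((pencil K A)⁻¹ʳ * .const K B) ^ l * (pencil K (A + z • B))⁻¹ʳ)

theorem contDiffAt_resolventRemainder (ν : Measure K) [IsFiniteMeasure ν] (l : ℕ) {A : 𝓐}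
    (hA : IsUnit (pencil K A)) (B : 𝓐) (n : ℕ) :
    ContDiffAt ℝ n (fun t : ℝ ↦ resolventRemainder ν l A B t) 0 := by
  have hline : ContDiff ℝ n fun t : ℝ ↦ pencil K (A + (t : ℂ) • B) := by
    have h (t : ℝ) : pencil K (A + (t : ℂ) • B) =
        1 - scalarCoordinate K 𝓐 * (ContinuousMap.const K A + t • ContinuousMap.const K B) := by
      rw [Complex.coe_smul]
      rfl
    simp only [h]
    fun_prop
  have hresolvent : ContDiffAt ℝ n (Ring.inverse ∘ fun t : ℝ ↦ pencil K (A + (t : ℂ) • B)) 0 :=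
    .comp 0 (by simpa using contDiffAt_ringInverse ℝ hA.unit) hline.contDiffAt
  exact ((integralContinuousMap ν).restrictScalars ℝ).contDiff.contDiffAt.comp _
    (contDiffAt_const.mul hresolvent)

theorem integral_pow_mul_ringInverse (hK : MeasurableSet K) (hμ : μ Kᶜ = 0) {Y : 𝓐}
    (hY : IsUnit (pencil K Y)) (l : ℕ) :
    ∫ s, Y ^ l * (1 - (s : ℂ) • Y)⁻¹ʳ ∂μ =
      integralContinuousMap (μ.comap ((↑) : K → ℝ)) (.const K Y ^ l * (pencil K Y)⁻¹ʳ) := by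
  rw [integralContinuousMap_apply, ← pow_mul_ringInverse_eq_continuousMap hY,
    integral_subtype_comap hK fun s : ℝ ↦ Y ^ l * (1 - (s : ℂ) • Y)⁻¹ʳ,
    Measure.restrict_eq_self_of_ae_mem (mem_ae_iff.mpr hμ)]

theorem exists_coeff_integral_pow_mul_ringInverse (hK : MeasurableSet K) (hμ : μ Kᶜ = 0) {A : 𝓐}
    (hA : IsUnit (pencil K A)) (B : 𝓐) (l : ℕ) :
    ∃ c : ℕ → 𝓐, ∀ z : ℂ, IsUnit (pencil K (A + z • B)) →
      ∫ s, (A + z • B) ^ l * (1 - (s : ℂ) • (A + z • B))⁻¹ʳ ∂μ =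
        ∑ j ∈ range l, z ^ j • c j +
          z ^ l • resolventRemainder (μ.comap ((↑) : K → ℝ)) l A B z := by
  obtain ⟨c, hc⟩ :=
    exists_coeff_pow_mul_ringInverse (S := ℂ) commute_scalarCoordinate hA (.const K B) l
  refine ⟨fun j ↦ integralContinuousMap (μ.comap ((↑) : K → ℝ)) (c j), fun z hz ↦ ?_⟩
  rw [integral_pow_mul_ringInverse hK hμ hz]
  refine (congrArg (integralContinuousMap _) (hc z hz)).trans ?_
  simp only [map_add, map_sum, map_smul]
  rfl

end Banach

section CStar

variable {𝓐 : Type*} [CStarAlgebra 𝓐] [PartialOrder 𝓐] [StarOrderedRing 𝓐]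

theorem isStrictlyPositive_one_sub_smul {A : 𝓐} (hA : IsSelfAdjoint A) (hA' : ‖A‖ < 1) {s : ℝ}
    (hs : s ∈ Set.Icc (-1) 1) : IsStrictlyPositive (1 - (s : ℂ) • A) := by
  refine isStrictlyPositive_one_sub (.smul (Complex.conj_ofReal s) hA) ?_
  calc ‖(s : ℂ) • A‖ ≤ |s| * ‖A‖ := by rw [norm_smul, Complex.norm_real, Real.norm_eq_abs]
    _ ≤ 1 * ‖A‖ := by gcongr; exact abs_le.mpr hs
    _ < 1 := by rwa [one_mul]

theorem isUnit_pencil_add_I_smul {A B : 𝓐} (hA : IsSelfAdjoint A) (hA' : ‖A‖ < 1)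
    (hB : IsSelfAdjoint B) : IsUnit (pencil (Set.Icc (-1) 1) (A + Complex.I • B)) := by
  refine isUnit_pencil_iff.mpr fun s hs ↦ ?_
  have h := isUnit_add_I_smul_s8 (isStrictlyPositive_one_sub_smul hA hA' hs)
    (.smul (r := -(s : ℂ)) (by simp [IsSelfAdjoint]) hB)
  convert! h using 1
  rw [smul_add, neg_smul, smul_neg, smul_comm, ← sub_sub, ← sub_eq_add_neg]

theorem isUnit_pencil_add_neg_I_smul {A B : 𝓐} (hA : IsSelfAdjoint A) (hA' : ‖A‖ < 1)
    (hB : IsSelfAdjoint B) : IsUnit (pencil (Set.Icc (-1) 1) (A + (-Complex.I) • B)) := by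
  simpa using isUnit_pencil_add_I_smul hA hA' hB.neg

theorem isUnit_pencil {A : 𝓐} (hA : IsSelfAdjoint A) (hA' : ‖A‖ < 1) :
    IsUnit (pencil (Set.Icc (-1) 1) A) := by
  simpa using isUnit_pencil_add_I_smul hA hA' (.zero 𝓐)

theorem exists_forall_isUnit_pencil {A : 𝓐} (hA : IsSelfAdjoint A) (hA' : ‖A‖ < 1) (B : 𝓐) :
    ∃ δ > 0, ∀ t : ℝ, |t| < δ → IsUnit (pencil (Set.Icc (-1) 1) (A + t • B)) := by
  obtain ⟨δ, hδ, hball⟩ := Metric.mem_nhds_iff.mp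
    (setOf_isUnit_pencil_mem_nhds_zero (isUnit_pencil hA hA') B)
  refine ⟨δ, hδ, fun t ht ↦ ?_⟩
  simpa using hball (show (t : ℂ) ∈ Metric.ball 0 δ by simpa using ht)

theorem pow_mul_ringInverse_add_nonneg {A B : 𝓐} (hA : IsSelfAdjoint A) (hA' : ‖A‖ < 1)
    (hB : IsSelfAdjoint B) {s : ℝ} (hs : s ∈ Set.Icc (-1) 1) (n : ℕ) :
    0 ≤ ((1 - (s : ℂ) • A)⁻¹ʳ * B) ^ (2 * n) *
      ((1 - (s : ℂ) • (A + Complex.I • B))⁻¹ʳ + (1 - (s : ℂ) • (A + (-Complex.I) • B))⁻¹ʳ) := by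
  have hd := isStrictlyPositive_one_sub_smul hA hA' hs
  have hw : 1 - (s : ℂ) • (A + Complex.I • B) =
      (1 - (s : ℂ) • A) + (-(s * Complex.I)) • B := by
    rw [smul_add, smul_smul, neg_smul, ← sub_sub, ← sub_eq_add_neg]
  have hstar : 1 - (s : ℂ) • (A + (-Complex.I) • B) =
      star (1 - (s : ℂ) • (A + Complex.I • B)) := by
    simp [hA.star_eq, hB.star_eq]
  have hunit := isUnit_pencil_iff.mp (isUnit_pencil_add_I_smul hA hA' hB) s hs
  rw [hstar, Ring.inverse_star, hw]
  exact pow_mul_ringInverse_add_star_nonneg hd.nonneg hd.isUnit hB (by simp) (hw ▸ hunit) n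

theorem resolventRemainder_add_nonneg (ν : Measure (Set.Icc (-1 : ℝ) 1)) [IsFiniteMeasure ν]
    {A B : 𝓐} (hA : IsSelfAdjoint A) (hA' : ‖A‖ < 1) (hB : IsSelfAdjoint B) (n : ℕ) :
    0 ≤ resolventRemainder ν (2 * n) A B Complex.I +
      resolventRemainder ν (2 * n) A B (-Complex.I) := by
  have hA0 := isUnit_pencil hA hA'
  have hI := isUnit_pencil_add_I_smul hA hA' hB
  have hI' := isUnit_pencil_add_neg_I_smul hA hA' hB
  rw [resolventRemainder, resolventRemainder, ← map_add, ← mul_add, integralContinuousMap_apply]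
  refine integral_nonneg fun s ↦ ?_
  simpa [continuousMap_ringInverse_apply, hA0, hI, hI', pencil_apply, -neg_smul] using
    pow_mul_ringInverse_add_nonneg hA hA' hB s.2 n

end CStar

end Resolvent

section IntegralRepresentation

theorem star_fcal (P : ℝ[X]) (μ : Measure ℝ) (l : ℕ) (Y : H →L[ℂ] H) :
    star (fcal P μ l Y) = fcal P μ l (star Y) := by
  rw [fcal, fcal, star_add]
  congr 1
  · simp [aeval_eq_sum_range]
  · have hstar (s : ℝ) : star (Y ^ l * (1 - (s : ℂ) • Y)⁻¹ʳ) =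
        star Y ^ l * (1 - (s : ℂ) • star Y)⁻¹ʳ := by
      have hcomm : Commute (star Y) (1 - (s : ℂ) • star Y) :=
        (Commute.one_right _).sub_right ((Commute.refl _).smul_right _)
      have hpencil : star (1 - (s : ℂ) • Y) = 1 - (s : ℂ) • star Y := by simp
      rw [star_mul, star_pow, ← Ring.inverse_star, hpencil]
      exact ((commute_ringInverse_right_s8 hcomm).pow_left l).symm.eq
    exact ((starL' ℝ).integral_comp_comm _).symm.trans (integral_congr_ae (.of_forall hstar))

theorem opRe_fcal_add_I_smul (P : ℝ[X]) (μ : Measure ℝ) (l : ℕ) {A B : H →L[ℂ] H}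
    (hA : IsSelfAdjoint A) (hB : IsSelfAdjoint B) :
    opRe (fcal P μ l (A + Complex.I • B)) = (2 : ℂ)⁻¹ •
      (fcal P μ l (A + Complex.I • B) + fcal P μ l (A + (-Complex.I) • B)) := by
  have hstar : star (A + Complex.I • B) = A + (-Complex.I) • B := by
    simp [hA.star_eq, hB.star_eq]
  rw [opRe, star_fcal, hstar]

variable {μ : Measure ℝ} [IsFiniteMeasure μ]

theorem exists_coeff_fcal {K : Set ℝ} [CompactSpace K] (hK : MeasurableSet K) (hμ : μ Kᶜ = 0)
    {l : ℕ} {P : ℝ[X]} (hP : P.degree < l) {A : H →L[ℂ] H} (hA : IsUnit (pencil K A))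
    (B : H →L[ℂ] H) :
    ∃ c : ℕ → H →L[ℂ] H, ∀ z : ℂ, IsUnit (pencil K (A + z • B)) →
      fcal P μ l (A + z • B) = ∑ j ∈ range l, z ^ j • c j +
        z ^ l • resolventRemainder (μ.comap ((↑) : K → ℝ)) l A B z := by
  obtain ⟨p, hp⟩ := exists_coeff_aeval_line A B
    ((degree_map_le (f := Complex.ofRealHom)).trans_lt hP)
  obtain ⟨q, hq⟩ := exists_coeff_integral_pow_mul_ringInverse hK hμ hA B l
  refine ⟨p + q, fun z hz ↦ ?_⟩
  rw [fcal, hp, hq z hz, ← add_assoc, ← sum_add_distrib]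
  simp only [Pi.add_apply, smul_add]

theorem opRe_fcal_sub_sum_iteratedDeriv (hμ : μ (Set.Icc (-1 : ℝ) 1)ᶜ = 0) {n : ℕ} {P : ℝ[X]}
    (hP : P.degree < (2 * n : ℕ)) {A B : H →L[ℂ] H} (hA : IsSelfAdjoint A) (hA' : ‖A‖ < 1)
    (hB : IsSelfAdjoint B) :
    opRe (fcal P μ (2 * n) (A + Complex.I • B)) - ∑ m ∈ range n,
        ((-1 : ℝ) ^ m / (2 * m).factorial) •
          iteratedDeriv (2 * m) (fun t : ℝ ↦ fcal P μ (2 * n) (A + t • B)) 0 =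
      (-1 : ℝ) ^ n • (2 : ℝ)⁻¹ •
        (resolventRemainder (K := Set.Icc (-1) 1) (μ.comap (↑)) (2 * n) A B Complex.I +
          resolventRemainder (K := Set.Icc (-1) 1) (μ.comap (↑)) (2 * n) A B (-Complex.I)) := by
  have hA0 := isUnit_pencil hA hA'
  obtain ⟨c, hc⟩ := exists_coeff_fcal (K := Set.Icc (-1) 1) measurableSet_Icc hμ hP hA0 B
  have hreal (t : ℝ) : fcal P μ (2 * n) (A + t • B) = fcal P μ (2 * n) (A + (t : ℂ) • B) := by
    rw [Complex.coe_smul]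
  simp only [opRe_fcal_add_I_smul P μ _ hA hB, hreal]
  exact half_add_sub_sum_iteratedDeriv (f := fun z ↦ fcal P μ (2 * n) (A + z • B))
    (setOf_isUnit_pencil_mem_nhds_zero hA0 B)
    (isUnit_pencil_add_I_smul hA hA' hB) (isUnit_pencil_add_neg_I_smul hA hA' hB) hc
    (contDiffAt_resolventRemainder _ _ hA0 B _)

theorem stmt8_general (n : ℕ) (P : ℝ[X]) (hP : P.degree < (2 * n : ℕ))
    (μ : Measure ℝ) [IsFiniteMeasure μ] (hμ : μ (Set.Icc (-1 : ℝ) 1)ᶜ = 0)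
    (A B X : H →L[ℂ] H) (hA : IsSelfAdjoint A) (hB : IsSelfAdjoint B)
    (hspA : spectrum ℂ A ⊆ (fun x : ℝ ↦ (x : ℂ)) '' Set.Ioo (-1 : ℝ) 1)
    (hX : X = A + Complex.I • B) :
    (∀ s ∈ Set.Icc (-1 : ℝ) 1, IsUnit (1 - (s : ℂ) • X)) ∧
    (∃ δ > (0 : ℝ), ∀ t : ℝ, |t| < δ →
        ∀ s ∈ Set.Icc (-1 : ℝ) 1, IsUnit (1 - (s : ℂ) • (A + t • B))) ∧
    Integrable (fun s : ℝ ↦ X ^ (2 * n) * (1 - (s : ℂ) • X)⁻¹ʳ) μ ∧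
    (∃ δ > (0 : ℝ), ∀ t : ℝ, |t| < δ →
        Integrable (fun s : ℝ ↦
          (A + t • B) ^ (2 * n) * (1 - (s : ℂ) • (A + t • B))⁻¹ʳ) μ) ∧
    ((-1 : ℝ) ^ n • (opRe (fcal P μ (2 * n) X) - ∑ m ∈ range n,
        ((-1 : ℝ) ^ m / (2 * m).factorial) •
          iteratedDeriv (2 * m) (fun t : ℝ ↦ fcal P μ (2 * n) (A + t • B)) 0)).IsPositive := by
  subst hX
  have hA' : ‖A‖ < 1 := norm_lt_of_forall_mem_spectrum_norm_lt hA one_pos fun z hz ↦ by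
    obtain ⟨x, hx, rfl⟩ := hspA hz
    simpa using abs_lt.mpr hx
  have hI := isUnit_pencil_add_I_smul hA hA' hB
  obtain ⟨δ, hδ, hunit⟩ := exists_forall_isUnit_pencil hA hA' B
  refine ⟨isUnit_pencil_iff.mp hI, ⟨δ, hδ, fun t ht ↦ isUnit_pencil_iff.mp (hunit t ht)⟩,
    integrable_pow_mul_ringInverse measurableSet_Icc hμ hI _,
    ⟨δ, hδ, fun t ht ↦ integrable_pow_mul_ringInverse measurableSet_Icc hμ (hunit t ht) _⟩, ?_⟩
  rw [opRe_fcal_sub_sum_iteratedDeriv hμ hP hA hA' hB, smul_smul, ← mul_pow, neg_one_mul, neg_neg,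
    one_pow, one_smul, ← nonneg_iff_isPositive]
  exact smul_nonneg (by norm_num) (resolventRemainder_add_nonneg _ hA hA' hB n)

end IntegralRepresentation

/-- The `(4k−2)`-tone case of the main theorem: for `f(Y) = P(Y) + ∫ Y^{4k−2}(I−λY)⁻¹ dμ(λ)`
with `deg P < 4k−2` and `μ` a finite positive measure on `[−1,1]`, all the relevant operators
are invertible, the Bochner integrals exist, and
`Re f(X) ≤ Σ_{m=0}^{2k−2} ((−1)^m/(2m)!) D^{2m}f(A;B)` for `X = A + iB`. -/
theorem stmt8 [TopologicalSpace.SeparableSpace H] (hinf : ¬ FiniteDimensional ℂ H)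
    (k : ℕ) (hk : 1 ≤ k) (P : Polynomial ℝ) (hP : P.degree < ((4 * k - 2 : ℕ) : WithBot ℕ))
    (μ : Measure ℝ) [IsFiniteMeasure μ] (hμ : μ (Set.Icc (-1 : ℝ) 1)ᶜ = 0)
    (A B X : H →L[ℂ] H) (hA : IsSelfAdjoint A) (hB : IsSelfAdjoint B)
    (hspA : spectrum ℂ A ⊆ (fun x : ℝ => (x : ℂ)) '' Set.Ioo (-1 : ℝ) 1)
    (hX : X = A + Complex.I • B) :
    (∀ s ∈ Set.Icc (-1 : ℝ) 1, IsUnit (1 - (s : ℂ) • X)) ∧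
    (∃ δ > (0 : ℝ), ∀ t : ℝ, |t| < δ →
        ∀ s ∈ Set.Icc (-1 : ℝ) 1, IsUnit (1 - (s : ℂ) • (A + t • B))) ∧
    Integrable (fun s : ℝ => X ^ (4 * k - 2) * Ring.inverse (1 - (s : ℂ) • X)) μ ∧
    (∃ δ > (0 : ℝ), ∀ t : ℝ, |t| < δ →
        Integrable
          (fun s : ℝ =>
            (A + t • B) ^ (4 * k - 2) * Ring.inverse (1 - (s : ℂ) • (A + t • B))) μ) ∧
    ((∑ m ∈ Finset.range (2 * k - 1),
        ((-1 : ℝ) ^ m / (Nat.factorial (2 * m) : ℝ)) •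
          iteratedDeriv (2 * m) (fun t : ℝ => fcal P μ (4 * k - 2) (A + t • B)) 0)
      - opRe (fcal P μ (4 * k - 2) X)).IsPositive := by
  have hl : 2 * (2 * k - 1) = 4 * k - 2 := by omega
  have hodd : Odd (2 * k - 1) := ⟨k - 1, by omega⟩
  simpa only [hl, hodd.neg_one_pow, neg_smul, one_smul, neg_sub] using
    stmt8_general (2 * k - 1) P (hl ▸ hP) μ hμ A B X hA hB hspA hX
end
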